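/- arXiv:1712.04607 — 4 statements merged into one kernel-verified Lean document; each statement's English description precedes it below -/
import Mathlib

section
/- Let n = 2m be a positive even integer. Then the block diagonal matrix with (1,1) entry equal to 1 and lower right (n-1)×(n-1) block equal to -I_{n-1} (and zeros elsewhere) is not a sum of three idempotent matrices of M_n(Z_5). -/
set_option linter.unusedTactic false
set_option linter.unreachableTactic false

section ringlemmas

variable {R : Type*} [Ring R]

/-- The anticommutator of two of the three involutions. -/
lemma tiz_anti {a b c P : R} (ha : a * a = 1) (hb : b * b = 1) (hc : c * c = 1)
    (hP : P * P = P) (hs : b + c = -(a + P)) :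
    b * c + c * b = -1 + (P + a * P + P * a) := by
  have h1 : (b + c) * (b + c) = (a + P) * (a + P) := by rw [hs]; first | (noncomm_ring; done) | (norm_num; noncomm_ring; done) | (clear * -; noncomm_ring; norm_num; done) | (clear * -; grind)
  have h2 : (b + c) * (b + c) = 1 + 1 + (b * c + c * b) := by
    rw [mul_add, add_mul, add_mul, hb, hc]; abel
  have h3 : (a + P) * (a + P) = 1 + P + a * P + P * a := by
    rw [mul_add, add_mul, add_mul, ha, hP]; abel
  have h4 : b * c + c * b = (b + c) * (b + c) - 1 - 1 := by rw [h2]; abel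
  rw [h4, h1, h3]; abel

lemma tiz_comm {b c Q : R} (hb : b * b = 1)
    (hq : b * c + c * b = -1 + Q) : b * Q = Q * b := by
  have : Q = b * c + c * b + 1 := by rw [hq]; abel
  rw [this]
  have e1 : b * (b * c + c * b + 1) = b * b * c + b * c * b + b := by first | (noncomm_ring; done) | (norm_num; noncomm_ring; done) | (clear * -; noncomm_ring; norm_num; done) | (clear * -; grind)
  have e2 : (b * c + c * b + 1) * b = b * c * b + c * (b * b) + b := by first | (noncomm_ring; done) | (norm_num; noncomm_ring; done) | (clear * -; noncomm_ring; norm_num; done) | (clear * -; grind)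
  rw [e1, e2, hb]; simp; abel

lemma tiz_hb {b c : R} (hb : b * b = 1) :
    b * (b * c - c * b) = -((b * c - c * b) * b) := by
  have e1 : b * (b * c - c * b) = b * b * c - b * c * b := by first | (noncomm_ring; done) | (norm_num; noncomm_ring; done) | (clear * -; noncomm_ring; norm_num; done) | (clear * -; grind)
  have e2 : -((b * c - c * b) * b) = c * (b * b) - b * c * b := by first | (noncomm_ring; done) | (norm_num; noncomm_ring; done) | (clear * -; noncomm_ring; norm_num; done) | (clear * -; grind)
  rw [e1, e2, hb]; simp

lemma tiz_hh {b c Q : R} (hb : b * b = 1) (hc : c * c = 1)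
    (hq : b * c + c * b = -1 + Q) :
    (b * c - c * b) * (b * c - c * b) = Q * Q - 2 * Q - 3 := by
  have e1 : (b * c - c * b) * (b * c - c * b)
      = (b * c + c * b) * (b * c + c * b) - 2 * (b * (c * c) * b) - 2 * (c * (b * b) * c) := by
    first | (noncomm_ring; done) | (norm_num; noncomm_ring; done) | (clear * -; noncomm_ring; norm_num; done) | (clear * -; grind)
  rw [e1, hb, hc, mul_one, mul_one, hb, hc, hq]
  first | (noncomm_ring; done) | (norm_num; noncomm_ring; done) | (clear * -; noncomm_ring; norm_num; done) | (clear * -; grind)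

/-- The square of `Q`. -/
lemma tiz_QQ {a P : R} (k : ℤ) (ha : a * a = 1) (hP : P * P = P) (hk : P * a * P = k • P) :
    (P + a * P + P * a) * (P + a * P + P * a)
      = (2 + 2 * k) • P + (1 + k) • (P * a) + (1 + k) • (a * P) + a * P * a := by
  have e : (P + a * P + P * a) * (P + a * P + P * a)
    = P * P + P * a * P + P * P * a + a * (P * P) + a * (P * a * P) + a * (P * P) * a
      + P * a * P + P * (a * a) * P + P * a * P * a := by first | (noncomm_ring; done) | (norm_num; noncomm_ring; done) | (clear * -; noncomm_ring; norm_num; done) | (clear * -; grind)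
  rw [e, hk, ha, hP, mul_one, hP]
  simp only [mul_smul_comm, smul_mul_assoc, add_smul, one_smul, mul_smul, two_smul]
  abel

lemma tiz_QQQ {a P Q : R} (k : ℤ) (ha : a * a = 1) (hP : P * P = P) (hk : P * a * P = k • P)
    (hQ : Q = P + a * P + P * a) :
    Q * (Q * Q) = (1 + 2 * k) • (Q * Q) + (1 - k * k) • Q := by
  have h2 := tiz_QQ k ha hP hk
  rw [← hQ] at h2
  rw [h2, hQ]
  simp only [mul_add, add_mul, mul_smul_comm]
  have f1 : P * (P * a) = P * a := by rw [← mul_assoc, hP]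
  have f2 : P * (a * P) = k • P := by rw [← mul_assoc, hk]
  have f3 : P * (a * P * a) = k • (P * a) := by rw [← mul_assoc, f2, smul_mul_assoc]
  have f4 : a * P * P = a * P := by rw [mul_assoc, hP]
  have f5 : a * P * (P * a) = a * P * a := by rw [mul_assoc, f1, mul_assoc]
  have f6 : a * P * (a * P) = k • (a * P) := by rw [mul_assoc, f2, mul_smul_comm]
  have f7 : a * P * (a * P * a) = k • (a * P * a) := by
    rw [← mul_assoc, f6, smul_mul_assoc]
  have f8 : P * a * (P * a) = k • (P * a) := by rw [← mul_assoc, hk, smul_mul_assoc]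
  have f9 : P * a * (a * P) = P := by
    rw [mul_assoc, ← mul_assoc a a P, ha, one_mul, hP]
  have f10 : P * a * (a * P * a) = P * a := by
    rw [← mul_assoc, f9]
  rw [hP, f1, f2, f3, f4, f5, f6, f7, hk, f8, f9, f10]
  module

end ringlemmas

section matlemmas

variable {n : ℕ}

local notation "MM" => Matrix (Fin n) (Fin n) (ZMod 5)

lemma tiz_five : (5 : MM) = 0 := by
  have : ((5 : ℕ) : ZMod 5) = 0 := by decide
  have h2 : ((5 : ℕ) : MM) = 0 := by
    rw [← Matrix.diagonal_natCast, this]; simp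
  exact_mod_cast h2

lemma tiz_trace_zero {b h K : MM} (hbh : b * h = -(h * b)) (hK : h * h * K = 1) :
    b.trace = 0 := by
  have h1 : h * (h * K) = 1 := by rw [← mul_assoc, hK]
  have h2 : (h * K) * h = 1 := mul_eq_one_comm.mp h1
  have e : (h * b * (h * K)).trace = b.trace := by
    rw [Matrix.trace_mul_comm, ← mul_assoc, h2, one_mul]
  have e2 : h * b * (h * K) = - b := by
    have : h * b = -(b * h) := by rw [hbh, neg_neg]
    rw [this, neg_mul, mul_assoc, h1, mul_one]
  rw [e2, Matrix.trace_neg] at e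
  generalize b.trace = x at e
  revert x; decide

lemma tiz_not_even (hne : Even n) {b h p K : MM} (hb : b * b = 1)
    (hbh : b * h = -(h * b)) (hbp : b * p = p * b) (hhp : h * p = 0) (hph : p * h = 0)
    (hp : p * p = p) (hK : (h * h + p) * K = 1) (hd : (1 - 2 * p).det = -1) : False := by
  have e1 : b * (h + p) * b = -((h + p) * (1 - 2 * p)) := by
    have x1 : b * (h + p) * b = -(h * (b * b)) + p * (b * b) := by
      rw [mul_add, hbh, hbp]; first | (noncomm_ring; done) | (norm_num; noncomm_ring; done) | (clear * -; noncomm_ring; norm_num; done) | (clear * -; grind)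
    have x2 : (h + p) * (1 - 2 * p) = h + p - 2 * (h * p) - 2 * (p * p) := by first | (noncomm_ring; done) | (norm_num; noncomm_ring; done) | (clear * -; noncomm_ring; norm_num; done) | (clear * -; grind)
    rw [x1, x2, hb, hhp, hp]; first | (noncomm_ring; done) | (norm_num; noncomm_ring; done) | (clear * -; noncomm_ring; norm_num; done) | (clear * -; grind)
  have e2 : (h + p) * (h + p) = h * h + p := by
    rw [mul_add, add_mul, add_mul, hhp, hph, hp]; simp
  have hdet : (h + p).det ≠ 0 := by
    intro h0
    have := congrArg Matrix.det hK
    rw [← e2, Matrix.det_mul, Matrix.det_mul, h0, Matrix.det_one] at this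
    simp only [zero_mul] at this
    exact absurd this (by decide)
  have hbd : b.det * b.det = 1 := by rw [← Matrix.det_mul, hb, Matrix.det_one]
  have := congrArg Matrix.det e1
  rw [Matrix.det_neg, Matrix.det_mul, Matrix.det_mul, Matrix.det_mul, hd, Fintype.card_fin,
    hne.neg_one_pow, mul_right_comm, hbd] at this
  generalize (h + p).det = x at this hdet
  revert x; decide

lemma tiz_PXP (i : Fin n) (X : MM) :
    Matrix.single i i 1 * X * Matrix.single i i 1 = X i i • (Matrix.single i i 1 : MM) := by
  simp [Matrix.single_mul_mul_single]

lemma tiz_detP (i : Fin n) : (1 - 2 * (Matrix.single i i 1 : MM)).det = -1 := by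
  have : (1 - 2 * (Matrix.single i i 1 : MM))
      = Matrix.diagonal (fun j => if j = i then -1 else 1) := by
    ext j k
    rw [two_mul]
    simp only [Matrix.sub_apply, Matrix.add_apply, Matrix.one_apply, Matrix.single_apply,
      Matrix.diagonal_apply]
    by_cases h1 : j = k
    · subst h1
      by_cases h2 : i = j
      · simp only [h2, and_self, if_true]; decide
      · simp [h2, Ne.symm h2]
    · have : ¬ (i = j ∧ i = k) := fun h => h1 (h.1.symm.trans h.2)
      simp [h1, this]
  rw [this, Matrix.det_diagonal, Finset.prod_ite_eq' ] <;> simp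

/-- A matrix commuting with a rank one idempotent and squaring to zero on it kills it. -/
lemma tiz_kill (i : Fin n) {X Y h : MM} {p : MM} (hp : p = X * Matrix.single i i 1 * Y)
    (hpp : p * p = p) (hc : h * p = p * h) (h2 : h * h * p = 0) : h * p = 0 := by
  obtain ⟨s, hs⟩ : ∃ s : ZMod 5, p * h * p = s • p := by
    refine ⟨(Y * h * X) i i, ?_⟩
    have : p * h * p = X * (Matrix.single i i 1 * (Y * h * X) * Matrix.single i i 1) * Y := by
      rw [hp]; first | (noncomm_ring; done) | (norm_num; noncomm_ring; done) | (clear * -; noncomm_ring; norm_num; done) | (clear * -; grind)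
    rw [this, tiz_PXP, hp, Matrix.mul_smul, Matrix.smul_mul]
  have h3 : h * p = s • p := by
    rw [← hs, ← hc, mul_assoc, hpp]
  rw [mul_assoc, h3, Matrix.mul_smul, h3, smul_smul] at h2
  have hz : ∀ s : ZMod 5, s = 0 ∨ ∃ t, t * (s * s) = 1 := by decide
  rcases hz s with h4 | ⟨t, ht⟩
  · rw [h3, h4, zero_smul]
  · have h6 : p = 0 := by
      rw [← one_smul (ZMod 5) p, ← ht, mul_smul, h2, smul_zero]
    rw [h6, mul_zero]

set_option maxHeartbeats 2000000 in
/-- The main dichotomy. -/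
lemma tiz_main (hne : Even n) (i : Fin n) {a b c : MM} (ha : a * a = 1) (hb : b * b = 1)
    (hc : c * c = 1) (hs : a + b + c = - Matrix.single i i 1) :
    a i i = 0 ∨ ((a i i = 2 ∨ a i i = 3) ∧ b.trace = 0 ∧ c.trace = 0) := by
  have h5 : (5 : MM) = 0 := tiz_five
  obtain ⟨P, hPdef⟩ : ∃ P : MM, P = Matrix.single i i 1 := ⟨_, rfl⟩
  have hP : P * P = P := by rw [hPdef]; simp
  have hk0 : P * a * P = a i i • P := by rw [hPdef]; exact tiz_PXP i a
  rw [← hPdef] at hs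
  have hs' : b + c = -(a + P) := by
    have : b + c = (a + b + c) - a := by abel
    rw [this, hs]; abel
  obtain ⟨Q, hQ⟩ : ∃ Q, Q = P + a * P + P * a := ⟨_, rfl⟩
  have hq : b * c + c * b = -1 + Q := by rw [hQ]; exact tiz_anti ha hb hc hP hs'
  have hq' : c * b + b * c = -1 + Q := by rw [add_comm]; exact hq
  have hbQ := tiz_comm hb hq
  have hcQ := tiz_comm hc hq'
  have hbh := tiz_hb (c := c) hb
  have hch : c * (b * c - c * b) = -((b * c - c * b) * c) := by
    have := tiz_hb (c := b) hc
    rw [← neg_sub (c * b) (b * c), mul_neg, this, neg_mul]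
  have hhh := tiz_hh hb hc hq
  have hhQ : (b * c - c * b) * Q = Q * (b * c - c * b) := by
    rw [sub_mul, mul_sub, mul_assoc, hcQ, ← mul_assoc, hbQ, mul_assoc c b, hbQ, ← mul_assoc c,
      hcQ, mul_assoc, mul_assoc]
  obtain ⟨h, hh⟩ : ∃ h, h = b * c - c * b := ⟨_, rfl⟩
  rw [← hh] at hbh hch hhh hhQ
  have hcases : ∀ x : ZMod 5, x = 0 ∨ x = 1 ∨ x = 2 ∨ x = 3 ∨ x = -1 := by decide
  have hint : ∀ k : ℤ, a i i = (k : ZMod 5) → P * a * P = k • P := by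
    intro k hk
    rw [hk0, hk, Int.cast_smul_eq_zsmul]
  rcases hcases (a i i) with h0 | h1 | h2 | h3 | h4
  · exact Or.inl h0
  · exfalso
    have hk := hint 1 (by simpa using h1)
    have hQ2 := tiz_QQ 1 ha hP hk
    have hQ3 := tiz_QQQ 1 ha hP hk hQ
    rw [← hQ] at hQ2
    have hQ3' : Q * (Q * Q) = 3 * (Q * Q) := by rw [hQ3]; first | (noncomm_ring; done) | (norm_num; noncomm_ring; done) | (clear * -; noncomm_ring; norm_num; done) | (clear * -; grind)
    have hpX : -(Q * Q) = (-(a + 2)) * Matrix.single i i 1 * (a + 2) := by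
      rw [← hPdef, hQ2]; first | (noncomm_ring; done) | (norm_num; noncomm_ring; done) | (clear * -; noncomm_ring; norm_num; done) | (clear * -; grind)
    have hpp : -(Q * Q) * -(Q * Q) = -(Q * Q) := by
      have : -(Q * Q) * -(Q * Q) = Q * (Q * (Q * Q)) := by first | (noncomm_ring; done) | (norm_num; noncomm_ring; done) | (clear * -; noncomm_ring; norm_num; done) | (clear * -; grind)
      rw [this, hQ3']
      have : Q * (3 * (Q * Q)) = 3 * (Q * (Q * Q)) := by first | (noncomm_ring; done) | (norm_num; noncomm_ring; done) | (clear * -; noncomm_ring; norm_num; done) | (clear * -; grind)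
      rw [this, hQ3']
      have : (3 * (3 * (Q * Q)) : MM) = 5 * (2 * (Q * Q)) - Q * Q := by first | (noncomm_ring; done) | (norm_num; noncomm_ring; done) | (clear * -; noncomm_ring; norm_num; done) | (clear * -; grind)
      rw [this, h5]; simp
    have hcm : h * -(Q * Q) = -(Q * Q) * h := by
      rw [mul_neg, neg_mul, ← mul_assoc, hhQ, mul_assoc, hhQ, mul_assoc]
    have hhhp : h * h * -(Q * Q) = 0 := by
      rw [hhh]
      have : (Q * Q - 2 * Q - 3) * -(Q * Q) = -(Q * (Q * (Q * Q))) + 2 * (Q * (Q * Q))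
        + 3 * (Q * Q) := by first | (noncomm_ring; done) | (norm_num; noncomm_ring; done) | (clear * -; noncomm_ring; norm_num; done) | (clear * -; grind)
      rw [this, hQ3']
      have : Q * (3 * (Q * Q)) = 3 * (Q * (Q * Q)) := by first | (noncomm_ring; done) | (norm_num; noncomm_ring; done) | (clear * -; noncomm_ring; norm_num; done) | (clear * -; grind)
      rw [this, hQ3']
      first | (noncomm_ring; done) | (norm_num; noncomm_ring; done) | (clear * -; noncomm_ring; norm_num; done) | (clear * -; grind)
    have hk1 := tiz_kill i hpX hpp hcm hhhp
    refine tiz_not_even hne (p := -(Q * Q)) (K := Q * Q - 2 * Q + 3) hb hbh ?_ hk1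
      (by rw [← hcm]; exact hk1) hpp ?_ ?_
    · rw [mul_neg, neg_mul, ← mul_assoc, hbQ, mul_assoc, hbQ, mul_assoc]
    · rw [hhh]
      have : (Q * Q - 2 * Q - 3 + -(Q * Q)) * (Q * Q - 2 * Q + 3)
          = -2 * (Q * (Q * Q)) + Q * Q - 9 := by first | (noncomm_ring; done) | (norm_num; noncomm_ring; done) | (clear * -; noncomm_ring; norm_num; done) | (clear * -; grind)
      rw [this, hQ3']
      have : (-2 * (3 * (Q * Q)) + Q * Q - 9 : MM) = 1 - 5 * (Q * Q + 2) := by first | (noncomm_ring; done) | (norm_num; noncomm_ring; done) | (clear * -; noncomm_ring; norm_num; done) | (clear * -; grind)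
      rw [this, h5]; simp
    · have e1 : (1 - 2 * -(Q * Q)) = 1 + (2 * (-(-(a + 2))) * P) * (-P * (-(a + 2))) := by
        have : (2 * (-(-(a + 2))) * P) * (-P * (-(a + 2))) = 2 * ((a + 2) * (P * P) * (a + 2)) := by
          first | (noncomm_ring; done) | (norm_num; noncomm_ring; done) | (clear * -; noncomm_ring; norm_num; done) | (clear * -; grind)
        rw [this, hP, hpX, ← hPdef]
        have : (1 - 2 * (-(a + 2) * P * (a + 2))) = 1 + 2 * ((a + 2) * P * (a + 2)) := by
          first | (noncomm_ring; done) | (norm_num; noncomm_ring; done) | (clear * -; noncomm_ring; norm_num; done) | (clear * -; grind)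
        rw [this]
      rw [e1, Matrix.det_one_add_mul_comm]
      have e2 : (-P * (-(a + 2))) * (2 * (-(-(a + 2))) * P)
          = 2 * (P * (a * a) * P) + 8 * (P * a * P) + 8 * (P * P) := by first | (noncomm_ring; done) | (norm_num; noncomm_ring; done) | (clear * -; noncomm_ring; norm_num; done) | (clear * -; grind)
      rw [e2, ha, hk, mul_one, hP, one_smul]
      have e3 : (1 + (2 * P + 8 * P + 8 * P) : MM) = 1 - 2 * P + 5 * (4 * P) := by first | (noncomm_ring; done) | (norm_num; noncomm_ring; done) | (clear * -; noncomm_ring; norm_num; done) | (clear * -; grind)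
      rw [e3, h5, zero_mul, add_zero, hPdef]
      exact tiz_detP i
  · right
    have hk := hint 2 (by simpa using h2)
    have hQ3 := tiz_QQQ 2 ha hP hk hQ
    have hK : h * h * (3 - Q) = 1 := by
      rw [hhh]
      have : (Q * Q - 2 * Q - 3) * (3 - Q) = - (Q * (Q * Q)) + 5 * (Q * Q) - 3 * Q - 9 := by
        first | (noncomm_ring; done) | (norm_num; noncomm_ring; done) | (clear * -; noncomm_ring; norm_num; done) | (clear * -; grind)
      rw [this, hQ3]
      have : (-((1 + 2 * 2 : ℤ) • (Q * Q) + (1 - 2 * 2 : ℤ) • Q) + 5 * (Q * Q) - 3 * Q - 9 : MM)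
        = 1 - 5 * 2 := by first | (noncomm_ring; done) | (norm_num; noncomm_ring; done) | (clear * -; noncomm_ring; norm_num; done) | (clear * -; grind)
      rw [this, h5]; simp
    exact ⟨Or.inl h2, tiz_trace_zero hbh hK, tiz_trace_zero hch hK⟩
  · right
    have hk := hint 3 (by simpa using h3)
    have hQ3 := tiz_QQQ 3 ha hP hk hQ
    have hQ3' : Q * (Q * Q) = 2 * (Q * Q) - 3 * Q := by
      have : Q * (Q * Q) = 2 * (Q * Q) - 3 * Q + 5 * (Q * Q - Q) := by rw [hQ3]; first | (noncomm_ring; done) | (norm_num; noncomm_ring; done) | (clear * -; noncomm_ring; norm_num; done) | (clear * -; grind)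
      rw [this, h5]; simp
    have hK : h * h * (3 * (Q * Q) - Q + 3) = 1 := by
      rw [hhh]
      have : (Q * Q - 2 * Q - 3) * (3 * (Q * Q) - Q + 3)
          = 3 * (Q * (Q * (Q * Q))) - 7 * (Q * (Q * Q)) - 4 * (Q * Q) - 3 * Q - 9 := by
        first | (noncomm_ring; done) | (norm_num; noncomm_ring; done) | (clear * -; noncomm_ring; norm_num; done) | (clear * -; grind)
      rw [this, hQ3']
      have : Q * (2 * (Q * Q) - 3 * Q) = 2 * (Q * (Q * Q)) - 3 * (Q * Q) := by first | (noncomm_ring; done) | (norm_num; noncomm_ring; done) | (clear * -; noncomm_ring; norm_num; done) | (clear * -; grind)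
      rw [this, hQ3']
      have : (3 * (2 * (2 * (Q * Q) - 3 * Q) - 3 * (Q * Q)) - 7 * (2 * (Q * Q) - 3 * Q)
          - 4 * (Q * Q) - 3 * Q - 9 : MM) = 1 - 5 * (3 * (Q * Q) + 2) := by first | (noncomm_ring; done) | (norm_num; noncomm_ring; done) | (clear * -; noncomm_ring; norm_num; done) | (clear * -; grind)
      rw [this, h5]; simp
    exact ⟨Or.inr h3, tiz_trace_zero hbh hK, tiz_trace_zero hch hK⟩
  · exfalso
    have hk := hint (-1) (by simpa using h4)
    have hQ2 := tiz_QQ (-1) ha hP hk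
    have hQ3 := tiz_QQQ (-1) ha hP hk hQ
    rw [← hQ] at hQ2
    have hQ3' : Q * (Q * Q) = - (Q * Q) := by rw [hQ3]; first | (noncomm_ring; done) | (norm_num; noncomm_ring; done) | (clear * -; noncomm_ring; norm_num; done) | (clear * -; grind)
    have hpX : Q * Q = a * Matrix.single i i 1 * a := by
      rw [← hPdef, hQ2]; first | (noncomm_ring; done) | (norm_num; noncomm_ring; done) | (clear * -; noncomm_ring; norm_num; done) | (clear * -; grind)
    have hpp : (Q * Q) * (Q * Q) = Q * Q := by
      rw [mul_assoc, hQ3', mul_neg, hQ3', neg_neg]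
    have hcm : h * (Q * Q) = (Q * Q) * h := by
      rw [← mul_assoc, hhQ, mul_assoc, hhQ, mul_assoc]
    have hhhp : h * h * (Q * Q) = 0 := by
      rw [hhh]
      have : (Q * Q - 2 * Q - 3) * (Q * Q) = (Q * Q) * (Q * Q) - 2 * (Q * (Q * Q))
        - 3 * (Q * Q) := by first | (noncomm_ring; done) | (norm_num; noncomm_ring; done) | (clear * -; noncomm_ring; norm_num; done) | (clear * -; grind)
      rw [this, hQ3', hpp]
      first | (noncomm_ring; done) | (norm_num; noncomm_ring; done) | (clear * -; noncomm_ring; norm_num; done) | (clear * -; grind)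
    have hk1 := tiz_kill i hpX hpp hcm hhhp
    refine tiz_not_even hne (p := Q * Q) (K := Q * Q - 2 * Q + 3) hb hbh ?_ hk1
      (by rw [← hcm]; exact hk1) hpp ?_ ?_
    · rw [← mul_assoc, hbQ, mul_assoc, hbQ, mul_assoc]
    · rw [hhh]
      have : (Q * Q - 2 * Q - 3 + (Q * Q)) * (Q * Q - 2 * Q + 3)
          = 2 * ((Q * Q) * (Q * Q)) - 6 * (Q * (Q * Q)) + 7 * (Q * Q) - 9 := by first | (noncomm_ring; done) | (norm_num; noncomm_ring; done) | (clear * -; noncomm_ring; norm_num; done) | (clear * -; grind)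
      rw [this, hQ3', hpp]
      have : (2 * (Q * Q) - 6 * (-(Q * Q)) + 7 * (Q * Q) - 9 : MM)
        = 1 + 5 * (3 * (Q * Q) - 2) := by first | (noncomm_ring; done) | (norm_num; noncomm_ring; done) | (clear * -; noncomm_ring; norm_num; done) | (clear * -; grind)
      rw [this, h5]; simp
    · have e1 : (1 - 2 * (Q * Q)) = 1 + (-2 * a * P) * (P * a) := by
        have : (-2 * a * P) * (P * a) = -2 * (a * (P * P) * a) := by first | (noncomm_ring; done) | (norm_num; noncomm_ring; done) | (clear * -; noncomm_ring; norm_num; done) | (clear * -; grind)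
        rw [this, hP, hpX, ← hPdef]
        first | (noncomm_ring; done) | (norm_num; noncomm_ring; done) | (clear * -; noncomm_ring; norm_num; done) | (clear * -; grind)
      rw [e1, Matrix.det_one_add_mul_comm]
      have e2 : (P * a) * (-2 * a * P) = -2 * (P * (a * a) * P) := by first | (noncomm_ring; done) | (norm_num; noncomm_ring; done) | (clear * -; noncomm_ring; norm_num; done) | (clear * -; grind)
      rw [e2, ha, mul_one, hP, neg_mul, ← sub_eq_add_neg, hPdef]
      exact tiz_detP i

end matlemmas

/-- For a positive even integer `n`, the diagonal matrix `diag(1, -1, …, -1)` is not a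
sum of three idempotent matrices of `M_n(ℤ/5)`. -/
theorem diag_one_neg_ones_not_sum_three_idempotents_zmod5 (n : ℕ) (hn : 0 < n)
    (hne : Even n) :
    ¬ ∃ E₁ E₂ E₃ : Matrix (Fin n) (Fin n) (ZMod 5),
      E₁ * E₁ = E₁ ∧ E₂ * E₂ = E₂ ∧ E₃ * E₃ = E₃ ∧
        Matrix.diagonal (fun i : Fin n => if (i : ℕ) = 0 then (1 : ZMod 5) else -1)
          = E₁ + E₂ + E₃ := by
  rintro ⟨E₁, E₂, E₃, h1, h2, h3, hsum⟩
  obtain ⟨i, hi⟩ : ∃ i : Fin n, (i : ℕ) = 0 := ⟨⟨0, hn⟩, rfl⟩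
  have inv : ∀ E : Matrix (Fin n) (Fin n) (ZMod 5), E * E = E →
      (2 * E - 1) * (2 * E - 1) = 1 := by
    intro E hE
    have : (2 * E - 1) * (2 * E - 1) = 4 * (E * E) - 4 * E + 1 := by first | (noncomm_ring; done) | (norm_num; noncomm_ring; done) | (clear * -; noncomm_ring; norm_num; done) | (clear * -; grind)
    rw [this, hE]; simp
  have hdiag : Matrix.diagonal (fun i : Fin n => if (i : ℕ) = 0 then (1 : ZMod 5) else -1)
      = -1 + 2 * Matrix.single i i 1 := by
    ext j k
    rw [two_mul]
    simp only [Matrix.neg_apply, Matrix.add_apply, Matrix.one_apply, Matrix.single_apply,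
      Matrix.diagonal_apply]
    by_cases h1 : j = k
    · subst h1
      by_cases h2 : i = j
      · subst h2; simp [hi]
      · have : (j : ℕ) ≠ 0 := fun h => h2 (Fin.ext (hi.trans h.symm))
        simp [h2, this]
    · have : ¬ (i = j ∧ i = k) := fun h => h1 (h.1.symm.trans h.2)
      simp [h1, this]
  have hs : (2 * E₁ - 1) + (2 * E₂ - 1) + (2 * E₃ - 1) = - Matrix.single i i 1 := by
    have e1 : (2 * E₁ - 1) + (2 * E₂ - 1) + (2 * E₃ - 1) = 2 * (E₁ + E₂ + E₃) - 3 := by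
      first | (noncomm_ring; done) | (norm_num; noncomm_ring; done) | (clear * -; noncomm_ring; norm_num; done) | (clear * -; grind)
    rw [e1, ← hsum, hdiag]
    generalize (Matrix.single i i 1 : Matrix (Fin n) (Fin n) (ZMod 5)) = P
    have : 2 * (-1 + 2 * P) - 3 = -P + 5 * (P - 1) := by first | (noncomm_ring; done) | (norm_num; noncomm_ring; done) | (clear * -; noncomm_ring; norm_num; done) | (clear * -; grind)
    rw [this, tiz_five]; simp
  have i1 := inv E₁ h1
  have i2 := inv E₂ h2
  have i3 := inv E₃ h3
  generalize 2 * E₁ - 1 = a at *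
  generalize 2 * E₂ - 1 = b at *
  generalize 2 * E₃ - 1 = c at *
  have ma := tiz_main hne i i1 i2 i3 hs
  have mb := tiz_main hne i i2 i3 i1 (by rw [← hs]; abel)
  have mc := tiz_main hne i i3 i1 i2 (by rw [← hs]; abel)
  have ht : a.trace + b.trace + c.trace = -1 := by
    rw [← Matrix.trace_add, ← Matrix.trace_add, hs, Matrix.trace_neg, Matrix.trace_single_eq_same]
  have he : a i i + b i i + c i i = -1 := by
    have := congrFun (congrFun hs i) i
    simpa using this
  generalize a i i = x at *
  generalize b i i = y at *
  generalize c i i = z at *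
  generalize a.trace = p at *
  generalize b.trace = q at *
  generalize c.trace = r at *
  clear * - ma mb mc ht he
  have key : ∀ x y z p q r : ZMod 5, x + y + z = -1 → p + q + r = -1 →
      (x = 0 ∨ ((x = 2 ∨ x = 3) ∧ q = 0 ∧ r = 0)) →
      (y = 0 ∨ ((y = 2 ∨ y = 3) ∧ r = 0 ∧ p = 0)) →
      (z = 0 ∨ ((z = 2 ∨ z = 3) ∧ p = 0 ∧ q = 0)) → False := by
    rintro x y z p q r he ht (rfl | ⟨rfl | rfl, rfl, rfl⟩) (rfl | ⟨rfl | rfl, h1, h2⟩)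
      (rfl | ⟨rfl | rfl, h3, h4⟩) <;> subst_vars <;> revert he ht <;> decide +revert
  exact key x y z p q r he ht ma mb mc
end

section
/- Let n be a positive even integer. Then the block diagonal matrix with (1,1) entry equal to 2 and lower right (n-1)×(n-1) block equal to -I_{n-1} (and zeros elsewhere) is not a sum of three idempotent matrices of M_n(Z_5). -/
set_option linter.unnecessarySeqFocus false
set_option linter.unusedSimpArgs false
set_option linter.unusedSectionVars false
section
variable {R : Type*} [Ring R] [Algebra (ZMod 5) R]

/-- normal forms -/
lemma aux_D (A B X D : R) (hA : A * A = A) (hB : B * B = B) (hX : X = A + B - 1)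
    (hD : D = A - B) : D * X = -(X * D) ∧ D * D = 1 - X * X := by
  subst hX hD
  constructor
  · simp only [mul_add, add_mul, mul_sub, sub_mul, hA, hB, mul_one, one_mul]; abel
  · simp only [mul_add, add_mul, mul_sub, sub_mul, hA, hB, mul_one, one_mul]; abel

lemma aux_Z (c : ZMod 5) (E P X : R) (hE : E * E = E) (hP : P * P = P)
    (hc : P * E * P = c • P) (hX : X = -(2 : ZMod 5) • (1 : R) - E + (3 : ZMod 5) • P) :
    X * X - (4 : ZMod 5) • (1 : R) = (2 : ZMod 5) • (E * P + P * E + P) ∧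
    (X * X - (4 : ZMod 5) • (1 : R)) * (X * X + (2 : ZMod 5) • X + (2 - 2 * c) • (1 : R)) = 0 := by
  have hE' : ∀ x, E * (E * x) = E * x := fun x => by rw [← mul_assoc, hE]
  have hP' : ∀ x, P * (P * x) = P * x := fun x => by rw [← mul_assoc, hP]
  have hc1 : P * (E * P) = c • P := by rw [← mul_assoc, hc]
  have hc' : ∀ x, P * (E * (P * x)) = c • (P * x) := fun x => by
    rw [← mul_assoc, ← mul_assoc, hc, smul_mul_assoc]
  have h1 : X * X - (4 : ZMod 5) • (1 : R) = (2 : ZMod 5) • (E * P + P * E + P) := by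
    subst hX
    simp only [mul_add, add_mul, mul_sub, sub_mul, smul_mul_assoc, mul_smul_comm, mul_one, one_mul,
      hE, hP, mul_assoc, hE', hP', hc1, hc', neg_smul, neg_mul, mul_neg, smul_add, smul_sub]
    match_scalars <;> decide
  refine ⟨h1, ?_⟩
  rw [h1, hX]
  simp only [mul_add, add_mul, mul_sub, sub_mul, smul_mul_assoc, mul_smul_comm, mul_one, one_mul,
      hE, hP, mul_assoc, hE', hP', hc1, hc', neg_smul, neg_mul, mul_neg, smul_add, smul_sub]
  match_scalars <;> (clear * - c; revert c; decide)

lemma aux_lin (c : ZMod 5) (X D : R) (h1 : D * X = -(X * D)) (h2 : D * D = 1 - X * X)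
    (hq : (X * X - (4 : ZMod 5) • (1 : R)) *
      (X * X + (2 : ZMod 5) • X + (2 - 2 * c) • (1 : R)) = 0) :
    (X * X - (4 : ZMod 5) • (1 : R)) * ((1 + 2 * c) • X - (1 - c) • (1 : R)) = 0 := by
  have h1' : ∀ x, D * (X * x) = -(X * (D * x)) := fun x => by rw [← mul_assoc, h1]; simp [mul_assoc]
  have h3 : X * ((X * X - (4 : ZMod 5) • (1 : R)) * D) = 0 := by
    have e : X * ((X * X - (4 : ZMod 5) • (1 : R)) * D) = 
       (X * X - (4 : ZMod 5) • (1 : R)) *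
      (X * X + (2 : ZMod 5) • X + (2 - 2 * c) • (1 : R)) * ((4 : ZMod 5) • D) - (4 : ZMod 5) • D *
      ((X * X - (4 : ZMod 5) • (1 : R)) *
      (X * X + (2 : ZMod 5) • X + (2 - 2 * c) • (1 : R))) := by
      simp only [mul_add, add_mul, mul_sub, sub_mul, smul_mul_assoc, mul_smul_comm, mul_one,
        one_mul, mul_assoc, h1, h1', neg_mul, mul_neg, smul_add, smul_sub, neg_neg, smul_neg]
      match_scalars <;> (clear * - c; revert c; decide)
    rw [e, hq]; simp
  have h4 : X * (X * X - (4 : ZMod 5) • (1 : R)) * (1 - X * X) = 0 := by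
    rw [← h2, ← mul_assoc, mul_assoc X, h3, zero_mul]
  have e : (X * X - (4 : ZMod 5) • (1 : R)) * ((1 + 2 * c) • X - (1 - c) • (1 : R)) =
      -(X * (X * X - (4 : ZMod 5) • (1 : R)) * (1 - X * X)) - (X * X - (4 : ZMod 5) • (1 : R)) *
      (X * X + (2 : ZMod 5) • X + (2 - 2 * c) • (1 : R)) * (X - (2 : ZMod 5) • (1 : R)) := by
    simp only [mul_add, add_mul, mul_sub, sub_mul, smul_mul_assoc, mul_smul_comm, mul_one,
        one_mul, mul_assoc, smul_add, smul_sub]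
    match_scalars <;> (clear * - c; revert c; decide)
  rw [e, h4, hq]; simp

/-- Conclusion of the linear relation. -/
lemma aux_cases (c : ZMod 5) (E P X : R) (hE : E * E = E) (hP : P * P = P) (hP0 : P ≠ 0)
    (hc : P * E * P = c • P) (hX : X = -(2 : ZMod 5) • (1 : R) - E + (3 : ZMod 5) • P)
    (hl : (E * P + P * E + P) * ((1 + 2 * c) • X - (1 - c) • (1 : R)) = 0) :
    (c = 0 ∧ E * P * E = 0) ∨ (c = 1 ∧ (1 - E) * P * (1 - E) = 0) := by
  have hE' : ∀ x, E * (E * x) = E * x := fun x => by rw [← mul_assoc, hE]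
  have hP' : ∀ x, P * (P * x) = P * x := fun x => by rw [← mul_assoc, hP]
  have hc1 : P * (E * P) = c • P := by rw [← mul_assoc, hc]
  have hc' : ∀ x, P * (E * (P * x)) = c • (P * x) := fun x => by
    rw [← mul_assoc, ← mul_assoc, hc, smul_mul_assoc]
  have key : ∀ k : ZMod 5, k ≠ 0 → k • P ≠ 0 := fun k hk h => by
    obtain ⟨j, hj⟩ : ∃ j : ZMod 5, j * k = 1 := by clear * - hk; revert k; decide
    have : j • (k • P) = P := by rw [smul_smul, hj, one_smul]
    rw [h, smul_zero] at this
    exact hP0 this.symm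
  have s1 : P * ((E * P + P * E + P) * ((1 + 2 * c) • X - (1 - c) • (1 : R))) * P = 0 := by
    rw [hl]; simp
  have s2 : P * E * ((E * P + P * E + P) * ((1 + 2 * c) • X - (1 - c) • (1 : R))) * P = 0 := by
    rw [hl]; simp
  subst hX
  have hcc : c = 0 ∨ c = 1 ∨ c = 2 ∨ c = 3 ∨ c = 4 := by clear * - c; revert c; decide
  rcases hcc with rfl | rfl | rfl | rfl | rfl
  · left
    refine ⟨rfl, ?_⟩
    rw [← smul_zero (4 : ZMod 5), ← hl]
    simp only [mul_add, add_mul, mul_sub, sub_mul, smul_mul_assoc, mul_smul_comm, mul_one, one_mul,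
      hE, hP, mul_assoc, hE', hP', hc1, hc', neg_smul, neg_mul, mul_neg, smul_add, smul_sub]
    match_scalars <;> decide
  · right
    refine ⟨rfl, ?_⟩
    rw [← smul_zero (3 : ZMod 5), ← hl]
    simp only [mul_add, add_mul, mul_sub, sub_mul, smul_mul_assoc, mul_smul_comm, mul_one, one_mul,
      hE, hP, mul_assoc, hE', hP', hc1, hc', neg_smul, neg_mul, mul_neg, smul_add, smul_sub]
    match_scalars <;> decide
  · exfalso
    simp only [mul_add, add_mul, mul_sub, sub_mul, smul_mul_assoc, mul_smul_comm, mul_one, one_mul,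
      hE, hP, mul_assoc, hE', hP', hc1, hc', neg_smul, neg_mul, mul_neg, smul_add, smul_sub] at s2
    refine key 3 (by decide) ?_
    refine Eq.trans ?_ s2
    match_scalars <;> decide
  · exfalso
    simp only [mul_add, add_mul, mul_sub, sub_mul, smul_mul_assoc, mul_smul_comm, mul_one, one_mul,
      hE, hP, mul_assoc, hE', hP', hc1, hc', neg_smul, neg_mul, mul_neg, smul_add, smul_sub] at s1
    refine key 3 (by decide) ?_
    refine Eq.trans ?_ s1
    match_scalars <;> decide
  · exfalso
    simp only [mul_add, add_mul, mul_sub, sub_mul, smul_mul_assoc, mul_smul_comm, mul_one, one_mul,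
      hE, hP, mul_assoc, hE', hP', hc1, hc', neg_smul, neg_mul, mul_neg, smul_add, smul_sub] at s1
    refine key 2 (by decide) ?_
    refine Eq.trans ?_ s1
    match_scalars <;> decide

lemma aux_zero (X D Q : R) (h1 : D * X = -(X * D)) (h2 : D * D = 1 - X * X)
    (hX : X * X = (4 : ZMod 5) • (1 : R) + (2 : ZMod 5) • Q) (hQX : Q * X = Q) :
    ∃ S T S' T' : R, S * S' = 1 ∧ T * T' = 1 ∧ S * T = T * ((2 : ZMod 5) • Q - 1) * S := by
  have hQ : Q = (3 : ZMod 5) • (X * X) - (2 : ZMod 5) • (1 : R) := by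
    rw [hX]; match_scalars <;> decide
  have hXQ : X * Q = Q := by
    refine Eq.trans ?_ hQX
    rw [hQ]; simp only [mul_sub, sub_mul, mul_smul_comm, smul_mul_assoc, mul_one, one_mul, mul_assoc]
  have hDQ : D * Q = Q * D := by
    have h1' : ∀ x, D * (X * x) = -(X * (D * x)) := fun x => by
      rw [← mul_assoc, h1]; simp [mul_assoc]
    rw [hQ]; simp only [mul_sub, sub_mul, mul_smul_comm, smul_mul_assoc, mul_one, one_mul,
      mul_assoc, h1, h1', mul_neg, neg_neg]
  have hQQ : Q * Q = Q := by
    have : Q * Q = (3 : ZMod 5) • (Q * X * X) - (2 : ZMod 5) • Q := by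
      nth_rewrite 2 [hQ]
      simp only [mul_sub, mul_smul_comm, mul_one, mul_assoc]
    rw [this, hQX, hQX]; match_scalars <;> decide
  have hQD : Q * D = 0 := by
    have e : Q * D = -(Q * D) := by
      calc Q * D = D * (X * Q) := by rw [hXQ, hDQ]
        _ = -(X * Q * D) := by rw [← mul_assoc, h1, neg_mul, mul_assoc, hDQ, mul_assoc]
        _ = _ := by rw [hXQ]
    have e2 : Q * D = (3 : ZMod 5) • (Q * D - (-(Q * D))) := by match_scalars <;> decide
    rw [e2, ← e]; simp
  rw [hQD] at hDQ
  have hD : D * D = (2 : ZMod 5) • (1 : R) - (2 : ZMod 5) • Q := by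
    rw [h2, hX]; match_scalars <;> decide
  refine ⟨D + Q, X, (D + Q) * ((3 : ZMod 5) • (1 : R) - (2 : ZMod 5) • Q),
    X * ((4 : ZMod 5) • (1 : R) + (2 : ZMod 5) • Q), ?_, ?_, ?_⟩
  · rw [← mul_assoc]
    simp only [mul_add, add_mul, mul_sub, sub_mul, smul_mul_assoc, mul_smul_comm, mul_one, one_mul,
      hD, hDQ, hQD, hQQ, zero_mul]
    match_scalars <;> decide
  · rw [← mul_assoc, hX]
    simp only [mul_add, add_mul, mul_sub, sub_mul, smul_mul_assoc, mul_smul_comm, mul_one, one_mul,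
      hQQ]
    match_scalars <;> decide
  · simp only [mul_add, add_mul, mul_sub, sub_mul, smul_mul_assoc, mul_smul_comm, mul_one, one_mul,
      hQQ, h1, hQX, hXQ, hQD]
    match_scalars <;> decide

lemma aux_one (X D Q : R) (h1 : D * X = -(X * D)) (h2 : D * D = 1 - X * X)
    (hX : X * X = (4 : ZMod 5) • (1 : R) + Q) (hQX : Q * X = 0) :
    ∃ S T S' T' : R, S * S' = 1 ∧ T * T' = 1 ∧ S * T = T * ((2 : ZMod 5) • Q - 1) * S := by
  have hQ : Q = X * X - (4 : ZMod 5) • (1 : R) := by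
    rw [hX]; match_scalars <;> decide
  have hXQ : X * Q = 0 := by
    refine Eq.trans ?_ hQX
    rw [hQ]; simp only [mul_sub, sub_mul, mul_smul_comm, smul_mul_assoc, mul_one, one_mul, mul_assoc]
  have hDQ : D * Q = Q * D := by
    have h1' : ∀ x, D * (X * x) = -(X * (D * x)) := fun x => by
      rw [← mul_assoc, h1]; simp [mul_assoc]
    rw [hQ]; simp only [mul_sub, sub_mul, mul_smul_comm, smul_mul_assoc, mul_one, one_mul,
      mul_assoc, h1, h1', mul_neg, neg_neg]
  have hQQ : Q * Q = Q := by
    have : Q * Q = Q * X * X - (4 : ZMod 5) • Q := by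
      nth_rewrite 2 [hQ]
      simp only [mul_sub, mul_smul_comm, mul_one, mul_assoc]
    rw [this, hQX, zero_mul]; match_scalars <;> decide
  have hD : D * D = (2 : ZMod 5) • (1 : R) - Q := by
    rw [h2, hX]; match_scalars <;> decide
  refine ⟨D, X + Q, D * ((3 : ZMod 5) • (1 : R) - (2 : ZMod 5) • Q),
    (X + Q) * ((4 : ZMod 5) • (1 : R) + (2 : ZMod 5) • Q), ?_, ?_, ?_⟩
  · rw [← mul_assoc, hD]
    simp only [mul_add, add_mul, mul_sub, sub_mul, smul_mul_assoc, mul_smul_comm, mul_one, one_mul,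
      hQQ]
    match_scalars <;> decide
  · rw [← mul_assoc]
    simp only [mul_add, add_mul, mul_sub, sub_mul, smul_mul_assoc, mul_smul_comm, mul_one, one_mul,
      hQQ, hX, hXQ, hQX, zero_mul]
    match_scalars <;> decide
  · simp only [mul_add, add_mul, mul_sub, sub_mul, smul_mul_assoc, mul_smul_comm, mul_one, one_mul,
      hQQ, h1, hQX, hXQ, hDQ, zero_mul]
    match_scalars <;> decide
end

lemma aux_vec {n : ℕ} {a b : Fin n → ZMod 5} :
    Matrix.vecMulVec a b = 0 ↔ a = 0 ∨ b = 0 := by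
  have : Fact (Nat.Prime 5) := ⟨by norm_num⟩
  exact Matrix.vecMulVec_eq_zero

lemma aux_det (n : ℕ) (hne : Even n) (S T S' T' Q : Matrix (Fin n) (Fin n) (ZMod 5))
    (hS : S * S' = 1) (hT : T * T' = 1) (h : S * T = T * ((2 : ZMod 5) • Q - 1) * S)
    (hQ : ∃ u v, Q = Matrix.vecMulVec u v) (ht : Q.trace = 1) : False := by
  obtain ⟨u, v, rfl⟩ := hQ
  have hd : ((2 : ZMod 5) • Matrix.vecMulVec u v - 1).det = -1 := by
    have e : (2 : ZMod 5) • Matrix.vecMulVec u v - 1 =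
      -(1 + Matrix.replicateCol Unit ((-2 : ZMod 5) • u) * Matrix.replicateRow Unit v) := by
      rw [← Matrix.vecMulVec_eq, Matrix.smul_vecMulVec, neg_smul]; abel
    rw [e, Matrix.det_neg, Matrix.det_one_add_replicateCol_mul_replicateRow, Fintype.card_fin,
      hne.neg_one_pow, dotProduct_smul, dotProduct_comm, ← Matrix.trace_vecMulVec, ht]
    decide
  have h' := congrArg Matrix.det h
  have hS' := congrArg Matrix.det hS
  have hT' := congrArg Matrix.det hT
  rw [Matrix.det_mul, Matrix.det_one] at hS' hT'
  rw [Matrix.det_mul, Matrix.det_mul, Matrix.det_mul, hd] at h'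
  generalize S.det = a at *
  generalize T.det = b at *
  generalize S'.det = a' at *
  generalize T'.det = b' at *
  clear * - h' hS' hT'
  revert a b a' b'
  decide

theorem diag_two_neg_ones_not_sum_three_idempotents_zmod5 (n : ℕ) (hn : 0 < n)
    (hne : Even n) :
    ¬ ∃ E₁ E₂ E₃ : Matrix (Fin n) (Fin n) (ZMod 5),
      E₁ * E₁ = E₁ ∧ E₂ * E₂ = E₂ ∧ E₃ * E₃ = E₃ ∧
        Matrix.diagonal (fun i : Fin n => if (i : ℕ) = 0 then (2 : ZMod 5) else -1)
          = E₁ + E₂ + E₃ := by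
  rintro ⟨A, B, E, hA, hB, hE, h⟩
  obtain ⟨i, hi⟩ : ∃ i : Fin n, (i : ℕ) = 0 := ⟨⟨0, hn⟩, rfl⟩
  obtain ⟨e, he⟩ : ∃ e : Fin n → ZMod 5, e = Pi.single i 1 := ⟨_, rfl⟩
  obtain ⟨P, hPe⟩ : ∃ P, P = Matrix.vecMulVec e e := ⟨_, rfl⟩
  obtain ⟨c, hcE⟩ : ∃ c, c = E i i := ⟨_, rfl⟩
  have hPs : P = Matrix.single i i 1 := by
    rw [hPe, he, Matrix.single_eq_single_vecMulVec_single]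
  have hP : P * P = P := by rw [hPs]; simp
  have hP0 : P ≠ 0 := by
    intro h0
    have := congrFun (congrFun (hPs.symm.trans h0) i) i
    simp at this
    exact absurd this (by decide)
  have hc : P * E * P = c • P := by
    rw [hPs, Matrix.single_mul_mul_single, hcE]; simp
  have hdiag : Matrix.diagonal (fun i : Fin n => if (i : ℕ) = 0 then (2 : ZMod 5) else -1)
      = -1 + (3 : ZMod 5) • P := by
    rw [hPs]
    ext j k
    by_cases hjk : j = k
    · subst hjk
      by_cases hj : j = i
      · subst hj; simp [hi]; decide
      · have : (j : ℕ) ≠ 0 := fun h0 => hj (Fin.ext (h0.trans hi.symm))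
        simp [this, Matrix.single_apply, Ne.symm hj]
    · have : ¬ (i = j ∧ i = k) := fun h0 => hjk (h0.1.symm.trans h0.2)
      simp [hjk, Matrix.single_apply, this]
  rw [hdiag] at h
  obtain ⟨X, hXd⟩ : ∃ X, X = A + B - 1 := ⟨_, rfl⟩
  have hX : X = -(2 : ZMod 5) • (1 : Matrix (Fin n) (Fin n) (ZMod 5)) - E + (3 : ZMod 5) • P := by
    have : X = (A + B + E) - 1 - E := by rw [hXd]; abel
    rw [this, ← h]; match_scalars <;> decide
  obtain ⟨h1, h2⟩ := aux_D A B X (A - B) hA hB hXd rfl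
  obtain ⟨hZ, hq⟩ := aux_Z c E P X hE hP hc hX
  have hl := aux_lin c X (A - B) h1 h2 hq
  rw [hZ] at hl
  have hl' : (E * P + P * E + P) *
      ((1 + 2 * c) • X - (1 - c) • (1 : Matrix (Fin n) (Fin n) (ZMod 5))) = 0 := by
    refine Eq.trans ?_ ((congrArg (fun x => (3 : ZMod 5) • x) hl).trans (smul_zero _))
    simp only [smul_mul_assoc]
    match_scalars <;> decide
  have hXX : X * X = (4 : ZMod 5) • (1 : Matrix (Fin n) (Fin n) (ZMod 5)) +
      (2 : ZMod 5) • (E * P + P * E + P) := by rw [← hZ]; abel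
  have htP : P.trace = 1 := by rw [hPs]; simp
  have htPE : (P * E).trace = c := by
    rw [← hP, mul_assoc, Matrix.trace_mul_comm, hc, Matrix.trace_smul, htP, smul_eq_mul, mul_one]
  have htEP : (E * P).trace = c := by rw [Matrix.trace_mul_comm, htPE]
  rcases aux_cases c E P X hE hP hP0 hc hX hl' with ⟨rfl, h0⟩ | ⟨rfl, h0⟩
  · obtain ⟨S, T, S', T', hS, hT, hST⟩ := aux_zero X (A - B) (E * P + P * E + P) h1 h2 hXX (by
      rw [← sub_eq_zero, ← hl']
      simp [mul_sub])
    refine aux_det n hne S T S' T' _ hS hT hST ?_ ?_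
    · rw [hPe, Matrix.mul_vecMulVec, Matrix.vecMulVec_mul, aux_vec] at h0
      rw [hPe, Matrix.mul_vecMulVec, Matrix.vecMulVec_mul]
      rcases h0 with h0 | h0 <;> rw [h0]
      · exact ⟨e, Matrix.vecMul e E + e, by simp [Matrix.vecMulVec_add]⟩
      · exact ⟨Matrix.mulVec E e + e, e, by simp [Matrix.add_vecMulVec]⟩
    · rw [Matrix.trace_add, Matrix.trace_add, htP, htPE, htEP]; decide
  · obtain ⟨S, T, S', T', hS, hT, hST⟩ := aux_one X (A - B)
      ((2 : ZMod 5) • (E * P + P * E + P)) h1 h2 hXX (by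
      refine Eq.trans ?_ ((congrArg (fun x => (4 : ZMod 5) • x) hl').trans (smul_zero _))
      simp only [smul_mul_assoc, mul_sub, mul_smul_comm, mul_one]
      match_scalars <;> decide)
    refine aux_det n hne S T S' T' _ hS hT hST ?_ ?_
    · rw [hPe, Matrix.mul_vecMulVec, Matrix.vecMulVec_mul, aux_vec,
        Matrix.sub_mulVec, Matrix.vecMul_sub, Matrix.one_mulVec, Matrix.vecMul_one,
        sub_eq_zero, sub_eq_zero] at h0
      rw [hPe, Matrix.mul_vecMulVec, Matrix.vecMulVec_mul]
      rcases h0 with h0 | h0 <;> rw [← h0]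
      · exact ⟨(2 : ZMod 5) • e, e + Matrix.vecMul e E + e, by
          simp only [Matrix.vecMulVec_add, Matrix.smul_vecMulVec, smul_add]⟩
      · exact ⟨(2 : ZMod 5) • (Matrix.mulVec E e + e + e), e, by
          simp only [Matrix.add_vecMulVec, Matrix.smul_vecMulVec, smul_add]⟩
    · rw [Matrix.trace_smul, Matrix.trace_add, Matrix.trace_add, htP, htPE, htEP]; decide
end

section
/- Let F be a field and n ≥ 1. The following are equivalent: (1) every matrix in M_n(F) is a sum of three idempotent matrices; (2) every invertible matrix in M_n(F) is a sum of three idempotent matrices; (3) F is isomorphic to Z_2 or to Z_3. -/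
open Polynomial Module

def SumThree {R : Type*} [Ring R] (a : R) : Prop :=
  ∃ e₁ e₂ e₃ : R, e₁ * e₁ = e₁ ∧ e₂ * e₂ = e₂ ∧ e₃ * e₃ = e₃ ∧ a = e₁ + e₂ + e₃

lemma SumThree.map {R S : Type*} [Ring R] [Ring S] (f : R →+* S) {a : R} (h : SumThree a) :
    SumThree (f a) := by
  obtain ⟨e₁, e₂, e₃, h₁, h₂, h₃, rfl⟩ := h
  exact ⟨f e₁, f e₂, f e₃, by rw [← map_mul, h₁], by rw [← map_mul, h₂], by rw [← map_mul, h₃],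
    by simp⟩

lemma sumThree_of_basis {F V : Type*} [Field F] [AddCommGroup V] [Module F V] (m : ℕ)
    (b : Basis (Fin (m+1)) F V) (φ : Module.End F V) (δ ε : F) (hδ : δ * δ = δ) (hε : ε * ε = ε)
    (h0 : ∀ k : Fin m, φ (b k.castSucc) =
      (1 + if k.val = 0 then δ else 0) • b k.castSucc + b k.succ)
    (ht : b.coord (Fin.last m) (φ (b (Fin.last m))) = 1 + ε + if m = 0 then δ else 0) :
    SumThree φ := by
  let E1 : Module.End F V := b.constr F (fun k => if Even k.val then
    (if h : k.val + 1 < m + 1 then b k + b ⟨k.val+1, h⟩ else ε • b k) else 0)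
  let E2 : Module.End F V := b.constr F (fun k => if k.val = 0 then δ • b k else if Even k.val then 0
    else (if h : k.val + 1 < m + 1 then b k + b ⟨k.val+1, h⟩ else ε • b k))
  let w := φ (b (Fin.last m)) - (ε + if m = 0 then δ else 0) • b (Fin.last m)
  let E3 : Module.End F V := (b.coord (Fin.last m)).smulRight w
  have e1 : ∀ k, E1 (b k) = if Even k.val then
    (if h : k.val + 1 < m + 1 then b k + b ⟨k.val+1, h⟩ else ε • b k) else 0 := fun k => by
    simp only [E1, Basis.constr_basis]
  have e2 : ∀ k, E2 (b k) = if k.val = 0 then δ • b k else if Even k.val then 0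
    else (if h : k.val + 1 < m + 1 then b k + b ⟨k.val+1, h⟩ else ε • b k) := fun k => by
    simp only [E2, Basis.constr_basis]
  have hw : b.coord (Fin.last m) w = 1 := by
    simp only [w, map_sub, ht, map_smul]
    simp
  refine ⟨E1, E2, E3, ?_, ?_, ?_, ?_⟩
  · refine b.ext fun k => ?_
    rw [Module.End.mul_apply, e1]
    split_ifs with h1 h2
    · rw [map_add, e1, e1]
      have : ¬ Even (k.val + 1) := by rw [Nat.even_add_one]; simpa using h1
      simp [h1, h2, this]
    · rw [map_smul, e1]
      simp [h1, h2, smul_smul, hε]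
    · simp
  · refine b.ext fun k => ?_
    rw [Module.End.mul_apply, e2]
    split_ifs with h0 h1 h2
    · rw [map_smul, e2]
      simp [h0, smul_smul, hδ]
    · simp
    · rw [map_add, e2, e2]
      have : Even (k.val + 1) := by rw [Nat.even_add_one]; simpa using h1
      simp [h1, h2, this, h0]
    · rw [map_smul, e2]
      simp [h1, h2, smul_smul, hε, h0]
  · ext x
    simp only [E3, Module.End.mul_apply, LinearMap.smulRight_apply, map_smul, hw]
    simp
  · refine b.ext fun k => ?_
    refine Fin.lastCases ?_ (fun k => ?_) k
    · simp only [LinearMap.add_apply, e1, e2, E3, LinearMap.smulRight_apply]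
      simp only [w]
      rcases Nat.eq_zero_or_pos m with rfl | hm
      · simp [add_smul]
      · have : m ≠ 0 := by omega
        by_cases hev : Even m <;> simp [this, hev]
    · rw [h0]
      simp only [LinearMap.add_apply, e1, e2, E3, LinearMap.smulRight_apply]
      have h3 : (b.coord (Fin.last m)) (b k.castSucc) = 0 := by
        simp [Finsupp.single_apply, Fin.ext_iff, k.2.ne]
      rw [h3]
      have hs : k.succ = ⟨k.val+1, by omega⟩ := rfl
      rcases Nat.eq_zero_or_pos k.val with hk | hk
      · have hm : 0 < m := by omega
        simp [hk, add_smul, hs, hm]; abel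
      · have : k.val ≠ 0 := by omega
        by_cases hev : Even k.val <;> simp [this, hev, hs]

noncomputable def qseq {F : Type*} [Field F] (δ : F) : Polynomial.Sequence F where
  elems' k := if k = 0 then 1 else (X - C (1 + δ)) * (X - C 1) ^ (k - 1)
  degree_eq' k := by
    rcases k with _ | k
    · simp
    · simp only [Nat.add_eq_zero_iff, one_ne_zero, and_false, if_false]
      rw [degree_mul, degree_pow, degree_X_sub_C, degree_X_sub_C]
      simp [add_comm]

lemma qseq_zero {F : Type*} [Field F] (δ : F) : qseq δ 0 = 1 := rfl
lemma qseq_succ {F : Type*} [Field F] (δ : F) (k : ℕ) :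
  qseq δ (k+1) = (X - C (1 + δ)) * (X - C 1) ^ k := rfl

lemma X_mul_qseq {F : Type*} [Field F] (δ : F) (k : ℕ) :
    X * qseq δ k = (1 + if k = 0 then δ else 0) • qseq δ k + qseq δ (k+1) := by
  rcases k with _ | k
  · rw [qseq_zero, qseq_succ, smul_eq_C_mul]; simp
  · rw [qseq_succ, qseq_succ, smul_eq_C_mul]; simp; ring

lemma sumThree_quot {F : Type*} [Field F] (hF : ∀ a : F, a = 0 ∨ a = 1 ∨ a = 2)
    (f : F[X]) (hf : f ≠ 0) :
    SumThree (Algebra.lsmul F F (F[X] ⧸ F[X] ∙ f) (X : F[X]) : Module.End F (F[X] ⧸ F[X] ∙ f)) := by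
  set φ := (Algebra.lsmul F F (F[X] ⧸ F[X] ∙ f) (X : F[X]) : Module.End F (F[X] ⧸ F[X] ∙ f)) with hφ
  have hrank : finrank F (F[X] ⧸ F[X] ∙ f) = f.natDegree := finrank_quotient_span_eq_natDegree
  rcases hd : f.natDegree with _ | m
  · have hu : IsUnit f := by
      rw [Polynomial.isUnit_iff_degree_eq_zero, degree_eq_natDegree hf, hd]; rfl
    have : Subsingleton (F[X] ⧸ F[X] ∙ f) := by
      rw [Submodule.Quotient.subsingleton_iff]
      exact Ideal.span_singleton_eq_top.2 hu
    exact ⟨0, 0, 0, by simp, by simp, by simp, Subsingleton.elim _ _⟩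
  obtain ⟨δ, ε, hδ, hε, htr⟩ : ∃ δ ε : F, δ * δ = δ ∧ ε * ε = ε ∧
      LinearMap.trace F _ φ = (m + 1) + δ + ε := by
    rcases hF (LinearMap.trace F _ φ - (m + 1)) with h | h | h
    · exact ⟨0, 0, by simp, by simp, by linear_combination h⟩
    · exact ⟨1, 0, by simp, by simp, by linear_combination h⟩
    · exact ⟨1, 1, by simp, by simp, by linear_combination h⟩
  let v : Fin (m+1) → (F[X] ⧸ F[X] ∙ f) := fun k => (F[X] ∙ f).mkQ (qseq δ k)
  have hli : LinearIndependent F v := by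
    rw [Fintype.linearIndependent_iff]
    intro g hg
    have h1 : (∑ i : Fin (m+1), g i • qseq δ i) ∈ (F[X] ∙ f) := by
      rw [← Submodule.Quotient.mk_eq_zero, ← Submodule.mkQ_apply]
      rw [← hg]
      simp only [v]
      rw [map_sum]
      refine Finset.sum_congr rfl fun i _ => ?_
      exact LinearMap.map_smul_of_tower _ _ _
    have h2 : (∑ i : Fin (m+1), g i • qseq δ i) = 0 := by
      refine Polynomial.eq_zero_of_dvd_of_degree_lt (Ideal.mem_span_singleton.1 h1) ?_
      rw [degree_eq_natDegree hf, hd]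
      refine lt_of_le_of_lt (degree_sum_le _ _) ?_
      rw [Finset.sup_lt_iff (by exact WithBot.bot_lt_coe _)]
      intro i _
      refine lt_of_le_of_lt (degree_smul_le _ _) ?_
      rw [(qseq δ).degree_eq]
      exact_mod_cast i.2
    have h3 := ((qseq δ).linearIndependent).comp (Fin.val : Fin (m+1) → ℕ) Fin.val_injective
    exact (Fintype.linearIndependent_iff.1 h3) g h2
  let b := basisOfLinearIndependentOfCardEqFinrank hli (by rw [hrank, hd]; simp)
  have hb : ∀ k, b k = v k := fun k => by simp [b]
  have hφb : ∀ k : Fin m, φ (b k.castSucc) =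
      (1 + if k.val = 0 then δ else 0) • b k.castSucc + b k.succ := by
    intro k
    rw [hb, hb, hφ, Algebra.lsmul_coe]
    simp only [v]
    rw [← map_smul, smul_eq_mul]
    simp only [Fin.val_castSucc, Fin.val_succ, X_mul_qseq, map_add]
    congr 1
  refine sumThree_of_basis m b φ δ ε hδ hε hφb ?_
  rw [LinearMap.trace_eq_matrix_trace F b, Matrix.trace, Fin.sum_univ_castSucc] at htr
  simp only [Matrix.diag_apply, LinearMap.toMatrix_apply, hφb] at htr
  have h5 : ∀ k : Fin m, (b.repr ((1 + if k.val = 0 then δ else 0) • b k.castSucc + b k.succ))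
      k.castSucc = 1 + if k.val = 0 then δ else 0 := by
    intro k
    simp [Finsupp.single_apply, Fin.ext_iff]
  simp only [h5] at htr
  rw [Basis.coord_apply]
  rcases m with _ | m
  · simp only [Finset.univ_eq_empty, Finset.sum_empty, zero_add, Nat.cast_zero] at htr
    rw [htr]
    simp only [if_true]
    ring
  · simp [Fin.sum_univ_succ] at htr ⊢
    linear_combination htr

lemma sumThree_end {F V : Type*} [Field F] [AddCommGroup V] [Module F V] [FiniteDimensional F V]
    (hF : ∀ a : F, a = 0 ∨ a = 1 ∨ a = 2) (φ : Module.End F V) : SumThree φ := by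
  have htors : Module.IsTorsion F[X] (AEval' φ) := by
    exact AEval.isTorsion_of_finiteDimensional F V φ
  obtain ⟨ι, _, p, hp, e, ⟨l⟩⟩ := Module.equiv_directSum_of_isTorsion htors
  classical
  have hs : ∀ i, SumThree (Algebra.lsmul F F (F[X] ⧸ F[X] ∙ (p i ^ e i)) (X : F[X]) : 
    Module.End F (F[X] ⧸ F[X] ∙ (p i ^ e i))) := fun i => 
      sumThree_quot hF _ (pow_ne_zero _ (hp i).ne_zero)
  choose e₁ e₂ e₃ h₁ h₂ h₃ h using hs
  let L : V ≃ₗ[F] (∀ i, F[X] ⧸ F[X] ∙ (p i ^ e i)) :=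
    (AEval'.of φ).trans ((l.trans (DirectSum.linearEquivFunOnFintype F[X] ι _)).restrictScalars F)
  have hL : ∀ v i, L (φ v) i = (X : F[X]) • (L v i) := by
    intro v i
    have : AEval'.of φ (φ v) = (X : F[X]) • AEval'.of φ v := (AEval'.X_smul_of φ v).symm
    simp only [L, LinearEquiv.trans_apply, this, LinearEquiv.restrictScalars_apply, map_smul,
      Pi.smul_apply]
  let P (g : ∀ i, Module.End F (F[X] ⧸ F[X] ∙ (p i ^ e i))) : Module.End F V :=
    L.symm.toLinearMap ∘ₗ (LinearMap.pi fun i => g i ∘ₗ LinearMap.proj i) ∘ₗ L.toLinearMap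
  have hP : ∀ g v i, L (P g v) i = g i (L v i) := by
    intro g v i
    simp [P]
  have hidem : ∀ g, (∀ i, g i * g i = g i) → P g * P g = P g := by
    intro g hg
    ext v
    apply L.injective
    ext1 i
    rw [Module.End.mul_apply, hP, hP, ← Module.End.mul_apply, hg]
  refine ⟨P e₁, P e₂, P e₃, hidem _ h₁, hidem _ h₂, hidem _ h₃, ?_⟩
  ext v
  apply L.injective
  ext1 i
  simp only [LinearMap.add_apply, map_add, Pi.add_apply, hP, hL]
  have := congrArg (fun g => g (L v i)) (h i)
  simpa using this

lemma sumThree_matrix {F : Type*} [Field F] (hF : ∀ a : F, a = 0 ∨ a = 1 ∨ a = 2) (n : ℕ)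
    (A : Matrix (Fin n) (Fin n) F) : SumThree A := by
  have := (sumThree_end hF (Matrix.toLinAlgEquiv' A)).map
    (LinearMap.toMatrixAlgEquiv' : _ ≃ₐ[F] Matrix (Fin n) (Fin n) F).toAlgHom.toRingHom
  simpa using this


lemma scalar_aux {F R : Type*} [Field F] [Ring R] [Algebra F R] [Nontrivial R] (h2 : (2:F) ≠ 0)
    (a : F) (h0 : a ≠ 0) (h1 : a ≠ 1) (ha2 : a ≠ 2) (h3 : a ≠ 3) (h32 : 2 * a ≠ 3)
    (x y z : R) (hx : x * x = x) (hy : y * y = y) (hz : z * z = z) 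
    (h : algebraMap F R a = x + y + z) : False := by
  have key : ∀ (c : F) (r : R), c ≠ 0 → c • r = 0 → r = 0 := fun c r hc hr => by
    rcases smul_eq_zero.1 hr with h | h
    · exact absurd h hc
    · exact h
  have hz' : z = a • 1 - x - y := by
    rw [← Algebra.algebraMap_eq_smul_one, h]; abel
  set d := y - z with hd
  have hD : (2 * (a - 1)) • d = x * d + d * x := by
    have e1 : (y + z - 1) * (y - z) + (y - z) * (y + z - 1) = 0 := by
      have : (y + z - 1) * (y - z) + (y - z) * (y + z - 1) = 2 * (y*y) - 2 * (z * z) - 2 * y + 2 * z := by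
        noncomm_ring
      rw [this, hy, hz]; abel
    have e2 : y + z = a • 1 - x := by rw [hz']; abel
    rw [e2, ← hd] at e1
    simp only [sub_mul, mul_sub, smul_mul_assoc, mul_smul_comm, one_mul, mul_one] at e1
    have : (2 * (a - 1)) • d = (a • d - d) + (a • d - d) := by module
    rw [this, ← sub_eq_zero, ← e1]; abel
  have hxdx : x * d * x = 0 := by
    apply key (2 * (a - 2)) _ (mul_ne_zero h2 (sub_ne_zero.2 ha2))
    have e := congrArg (fun t => x * t * x) hD
    simp only [mul_add, add_mul, mul_smul_comm, smul_mul_assoc] at e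
    rw [← mul_assoc, hx, mul_assoc x (d * x) x, mul_assoc d x x, hx, ← mul_assoc] at e
    have : (2 * (a - 2)) • (x * d * x) = (2 * (a-1)) • (x * d * x) - (x * d * x + x * d * x) := by
      module
    rw [this, e, sub_self]
  have hxd : x * d = 0 := by
    apply key (2 * a - 3) _ (sub_ne_zero.2 h32)
    have e := congrArg (fun t => x * t) hD
    simp only [mul_add, mul_smul_comm] at e
    rw [← mul_assoc, hx, ← mul_assoc, hxdx] at e
    have : (2 * a - 3) • (x * d) = (2 * (a-1)) • (x * d) - (x * d + 0) := by
      module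
    rw [this, e, sub_self]
  have hdx : d * x = 0 := by
    apply key (2 * a - 3) _ (sub_ne_zero.2 h32)
    have e := congrArg (fun t => t * x) hD
    simp only [add_mul, smul_mul_assoc] at e
    rw [mul_assoc d, hx, hxdx] at e
    have : (2 * a - 3) • (d * x) = (2 * (a-1)) • (d * x) - (0 + d * x) := by
      module
    rw [this, e, sub_self]
  have hd0 : d = 0 := by
    apply key _ _ (mul_ne_zero h2 (sub_ne_zero.2 h1))
    rw [hD, hxd, hdx, add_zero]
  have hyz : z = y := (sub_eq_zero.1 hd0).symm
  have hyy : (2:F) • y = a • 1 - x := by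
    rw [two_smul]; nth_rewrite 2 [← hyz]; rw [hz']; abel
  have hyy2 : (a • 1 - x) * (a • 1 - x) = (2 : F) • (a • 1 - x) := by
    rw [← hyy, smul_mul_smul_comm, hy, smul_smul]
  simp only [sub_mul, mul_sub, smul_mul_assoc, mul_smul_comm, one_mul, mul_one, hx] at hyy2
  have hyy3 : (a * (a - 2)) • (1:R) = (2 * a - 3) • x := by
    rw [← sub_eq_zero]
    rw [← sub_eq_zero] at hyy2
    rw [← hyy2]; module
  have hx0 : x = 0 := by
    apply key ((a-1) * (a-3)) _ (mul_ne_zero (sub_ne_zero.2 h1) (sub_ne_zero.2 h3))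
    have e := congrArg (fun t => t * x) hyy3
    simp only [smul_mul_assoc, hx, one_mul] at e
    rw [← sub_eq_zero] at e
    rw [← e]; module
  rw [hx0, smul_zero] at hyy3
  exact one_ne_zero (key _ _ (mul_ne_zero h0 (sub_ne_zero.2 ha2)) hyy3)

lemma even_aux {F V : Type*} [Field F] [AddCommGroup V] [Module F V] [FiniteDimensional F V]
    (h2 : (2:F) ≠ 0) (u d : Module.End F V) (c c' : F) (hc : c ≠ 0) (hc' : c' ≠ 0)
    (hu : u * u = c • 1) (hd : d * d = c' • 1) (hud : u * d = (-1 : F) • (d * u)) :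
    Even (finrank F V) := by
  have hu' : LinearMap.det u ≠ 0 := fun h => by
    have := congrArg LinearMap.det hu
    rw [map_mul, h, LinearMap.det_smul, map_one] at this
    rw [zero_mul, mul_one] at this
    exact pow_ne_zero _ hc this.symm
  have hd' : LinearMap.det d ≠ 0 := fun h => by
    have := congrArg LinearMap.det hd
    rw [map_mul, h, LinearMap.det_smul, map_one] at this
    rw [zero_mul, mul_one] at this
    exact pow_ne_zero _ hc' this.symm
  by_contra ho
  rw [Nat.not_even_iff_odd] at ho
  have := congrArg LinearMap.det hud
  rw [map_mul, LinearMap.det_smul, map_mul, ho.neg_one_pow] at this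
  have h3 : 2 * (LinearMap.det u * LinearMap.det d) = 0 := by linear_combination this
  exact (mul_ne_zero h2 (mul_ne_zero hu' hd')) h3

lemma five_odd {F V : Type*} [Field F] [AddCommGroup V] [Module F V] [FiniteDimensional F V]
    (h2 : (2:F) ≠ 0) (h3 : (3 : F) ≠ 0) (h5 : (5:F) = 0) (x y z : Module.End F V)
    (hx : x * x = x) (hy : y * y = y) (hz : z * z = z) (h : (4:F) • 1 = x + y + z) :
    Even (finrank F V) := by
  have e2 : y + z - 1 = (3:F) • 1 - x := by
    have : y + z = (4:F) • 1 - x := by rw [h]; abel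
    rw [this]; module
  have hu : (y + z - 1) * (y + z - 1) = (4:F) • 1 := by
    rw [e2]
    simp only [sub_mul, mul_sub, smul_mul_assoc, mul_smul_comm, one_mul, mul_one, hx]
    have : (3:F) • ((3:F) • (1 : Module.End F V) - x) - ((3:F) • x - x) =
      (4:F) • 1 + (5:F) • (1 - x) := by module
    rw [this, h5]; simp
  refine even_aux h2 (y + z - 1) (y - z) 4 (-3) ?_ (neg_ne_zero.2 h3) hu ?_ ?_
  · have : (4:F) = 2 * 2 := by norm_num
    rw [this]; exact mul_ne_zero h2 h2
  · have : (y - z) * (y - z) = 1 - (y + z - 1) * (y + z - 1) + 2 * (y * y - y) + 2 * (z * z - z) := by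
      noncomm_ring
    rw [this, hu, hy, hz]; simp; module
  · have : (y + z - 1) * (y - z) = (-1:F) • ((y - z) * (y + z - 1)) + 2 * (y * y - y) - 2 * (z * z - z) := by
      rw [neg_one_smul]
      noncomm_ring
    rw [this, hy, hz]; simp

lemma five_aux {F V : Type*} [Field F] [AddCommGroup V] [Module F V] [FiniteDimensional F V]
    (h2 : (2:F) ≠ 0) (h3 : (3 : F) ≠ 0) (h5 : (5:F) = 0) (x y z : Module.End F V)
    (e : V) (f : V →ₗ[F] F) (hfe : f e = 1)
    (hx : x * x = x) (hy : y * y = y) (hz : z * z = z) 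
    (h : ∀ v, x v + y v + z v = (4:F) • v + (2 * f v) • e) (hev : Even (finrank F V)) :
    LinearIndependent F ![e, x e] ∧ y e ∈ Submodule.span F {e, x e} := by
  set Z : Module.End F V := y * z + z * y - y - z + 1 + 1 with hZ
  set U : Module.End F V := y + z - 1 with hU
  set D : Module.End F V := y - z with hD
  have hUU : U * U = Z - 1 := by
    have : U * U = Z - 1 + (y * y - y) + (z * z - z) := by
      rw [hU, hZ]; noncomm_ring
    rw [this, hy, hz]; simp
  have hDD : D * D = (2:F) • 1 - Z := by
    have : D * D = (2:F) • 1 - Z + (y * y - y) + (z * z - z) := by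
      rw [hD, hZ, two_smul]; noncomm_ring
    rw [this, hy, hz]; simp
  have hUD : U * D = (-1:F) • (D * U) := by
    have : (y + z - 1) * (y - z) = (-1:F) • ((y - z) * (y + z - 1)) + 2 * (y * y - y) - 2 * (z * z - z) := by
      rw [neg_one_smul]
      noncomm_ring
    rw [hU, hD, this, hy, hz]; simp
  have hyZ : y * Z = Z * y := by
    have : y * Z = Z * y + (y * y - y) * z - z * (y * y - y) := by
      rw [hZ]; noncomm_ring
    rw [this, hy]; simp
  have hzZ : z * Z = Z * z := by
    have : z * Z = Z * z + (z * z - z) * y - y * (z * z - z) := by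
      rw [hZ]; noncomm_ring
    rw [this, hz]; simp
  have hUZ : U * Z = Z * U := by
    rw [hU]; simp only [sub_mul, add_mul, mul_add, mul_sub, hyZ, hzZ, one_mul, mul_one]
  have hDZ : D * Z = Z * D := by
    rw [hD]; simp only [sub_mul, mul_sub, hyZ, hzZ]
  have hUv : ∀ v, U v = (3:F) • v - x v + (2 * f v) • e := by
    intro v
    have : U v = (x v + y v + z v) - x v - v := by
      simp only [hU, LinearMap.sub_apply, LinearMap.add_apply, Module.End.one_apply]; abel
    rw [this, h]; module
  have hxx : ∀ v, x (x v) = x v := fun v => by rw [← Module.End.mul_apply, hx]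
  -- explicit form of `Z`
  have hZv : ∀ v, Z v = (f v * 6 - 2 * f (x v)) • e - (2 * f v) • x e := by
    intro v
    have e1 : Z v = U (U v) + v := by
      have : Z = U * U + 1 := by rw [hUU]; abel
      rw [this]; simp
    rw [e1, hUv, hUv]
    simp only [map_add, map_sub, map_smul, hxx, hfe, smul_eq_mul]
    have : (3:F) • ((3:F) • v - x v + (2 * f v) • e) - ((3:F) • x v - x v + (2 * f v) • x e) +
      (2 * (3 * f v - f (x v) + 2 * f v * 1)) • e + v = 
      (f v * 6 - 2 * f (x v)) • e - (2 * f v) • x e + (5:F) • ((2:F) • v - x v + (2 * f v) • e) := by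
      module
    rw [this, h5]; simp
  have hle : LinearMap.range Z ≤ Submodule.span F {e, x e} := by
    rintro _ ⟨v, rfl⟩
    rw [hZv]
    refine Submodule.sub_mem _ (Submodule.smul_mem _ _ (Submodule.subset_span (by simp)))
      (Submodule.smul_mem _ _ (Submodule.subset_span (by simp)))
  have hinv : ∀ T : Module.End F V, T * Z = Z * T → 
      LinearMap.range Z ≤ (LinearMap.range Z).comap T := by
    rintro T hT _ ⟨v, rfl⟩
    refine ⟨T v, ?_⟩
    rw [← Module.End.mul_apply, ← hT]; rfl
  have hmk : ∀ v, (LinearMap.range Z).mkQ (Z v) = 0 := fun v => by simp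
  have heven : Even (finrank F (V ⧸ LinearMap.range Z)) := by
    refine even_aux h2 ((LinearMap.range Z).mapQ _ U (hinv U hUZ))
      ((LinearMap.range Z).mapQ _ D (hinv D hDZ)) (-1) 2 (by simp) h2 ?_ ?_ ?_
    · apply Submodule.linearMap_qext
      ext v
      have := congrArg (fun g => (LinearMap.range Z).mkQ (g v)) hUU
      simp only [LinearMap.sub_apply, map_sub, hmk] at this
      simpa using this
    · apply Submodule.linearMap_qext
      ext v
      have := congrArg (fun g => (LinearMap.range Z).mkQ (g v)) hDD
      simp only [LinearMap.sub_apply, map_sub, hmk] at this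
      simpa using this
    · apply Submodule.linearMap_qext
      ext v
      have := congrArg (fun g => (LinearMap.range Z).mkQ (g v)) hUD
      simpa using this
  have hsum := (LinearMap.range Z).finrank_quotient_add_finrank
  have hrev : Even (finrank F (LinearMap.range Z)) := by
    rw [← hsum, Nat.even_add] at hev
    exact hev.1 heven
  have hZ0 : Z ≠ 0 := by
    intro h0
    have e1 : (6 - 2 * f (x e)) • e - (2:F) • x e = 0 := by
      have := hZv e
      rw [h0, hfe] at this
      simpa using this.symm
    have e2 : x e = (3 - f (x e)) • e := by
      have : (2:F) • (x e - (3 - f (x e)) • e) = 0 := by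
        rw [← neg_eq_zero, ← e1]; module
      exact sub_eq_zero.1 ((smul_eq_zero.1 this).resolve_left h2)
    have e3 := congrArg f e2
    rw [map_smul, hfe, smul_eq_mul] at e3
    have e4 := hxx e
    rw [e2, map_smul, e2] at e4
    have e5 := congrArg f e4
    simp only [map_smul, hfe, smul_eq_mul] at e5
    have e6 : f (x e) = 4 := by
      have : 2 * (f (x e) - 4) = 0 := by linear_combination e3 - h5
      exact sub_eq_zero.1 ((mul_eq_zero.1 this).resolve_left h2)
    rw [e6] at e5
    exact h2 (by linear_combination e5 + 2 * h5)
  have hr0 : finrank F (LinearMap.range Z) ≠ 0 := by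
    intro h0
    rw [Submodule.finrank_eq_zero, LinearMap.range_eq_bot] at h0
    exact hZ0 h0
  have hrle := Submodule.finrank_mono hle
  have hr2 : 2 ≤ finrank F (LinearMap.range Z) := by
    obtain ⟨k, hk⟩ := hrev
    omega
  have hset : ({e, x e} : Set V) = Set.range ![e, x e] := by simp [Set.pair_comm]
  have hX : finrank F (Submodule.span F ({e, x e} : Set V)) ≤ 2 := by
    rw [hset]
    simpa [Set.finrank] using finrank_range_le_card (R := F) (b := ![e, x e])
  have heq : LinearMap.range Z = Submodule.span F {e, x e} :=
    Submodule.eq_of_le_of_finrank_le hle (by omega)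
  constructor
  · rw [linearIndependent_iff_card_eq_finrank_span, ← hset, Set.finrank, Fintype.card_fin]
    omega
  · rw [← heq]
    have : e ∈ LinearMap.range Z := by rw [heq]; exact Submodule.subset_span (by simp)
    exact hinv y hyZ this

lemma five_even {F V : Type*} [Field F] [AddCommGroup V] [Module F V] [FiniteDimensional F V]
    (h2 : (2:F) ≠ 0) (h3 : (3 : F) ≠ 0) (h5 : (5:F) = 0) (x y z : Module.End F V)
    (e : V) (f : V →ₗ[F] F) (hfe : f e = 1)
    (hx : x * x = x) (hy : y * y = y) (hz : z * z = z) 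
    (h : ∀ v, x v + y v + z v = (4:F) • v + (2 * f v) • e) (hev : Even (finrank F V)) : False := by
  obtain ⟨hi1, hm⟩ := five_aux h2 h3 h5 x y z e f hfe hx hy hz h hev
  obtain ⟨hi2, -⟩ := five_aux h2 h3 h5 y x z e f hfe hy hx hz
    (fun v => by rw [← h]; abel) hev
  obtain ⟨hi3, -⟩ := five_aux h2 h3 h5 z x y e f hfe hz hx hy
    (fun v => by rw [← h]; abel) hev
  rw [Submodule.mem_span_pair] at hm
  obtain ⟨α, β, hαβ⟩ := hm
  rw [LinearIndependent.pair_iff] at hi1 hi2 hi3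
  have hxx : ∀ v, x (x v) = x v := fun v => by rw [← Module.End.mul_apply, hx]
  have hyy : ∀ v, y (y v) = y v := fun v => by rw [← Module.End.mul_apply, hy]
  have hzz : ∀ v, z (z v) = z v := fun v => by rw [← Module.End.mul_apply, hz]
  have hβ : β ≠ 0 := by
    rintro rfl
    have := hi2 (-α) 1 (by rw [← hαβ]; module)
    simp at this
  have hye : y (x e) = (β⁻¹ * (1 - α)) • y e := by
    have h1 := hyy e
    nth_rewrite 1 [← hαβ] at h1
    rw [map_add, map_smul, map_smul] at h1
    have : β • y (x e) = (1 - α) • y e := by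
      rw [sub_smul, one_smul, eq_sub_iff_add_eq, add_comm]; exact h1
    rw [mul_smul, ← this, smul_smul, inv_mul_cancel₀ hβ, one_smul]
  have hze : z e = (1 - α) • e - (1 + β) • x e := by
    have h1 := h e
    rw [hfe, ← hαβ] at h1
    have : z e = (x e + (α • e + β • x e) + z e) - x e - (α • e + β • x e) := by abel
    rw [this, h1]
    have : (4:F) • e + (2 * (1:F)) • e - x e - (α • e + β • x e) = 
      (1 - α) • e - (1 + β) • x e + (5:F) • e := by module
    rw [this, h5]; simp
  obtain ⟨γ, hγ⟩ : ∃ γ : F, z (x e) = γ • e + (2 + α) • x e := by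
    refine ⟨2 * f (x e) - β⁻¹ * (1 - α) * α, ?_⟩
    have h1 := h (x e)
    rw [hxx, hye, ← hαβ] at h1
    have : z (x e) = (x e + (β⁻¹ * (1 - α)) • (α • e + β • x e) + z (x e)) - x e 
      - (β⁻¹ * (1 - α)) • (α • e + β • x e) := by abel
    rw [this, h1]
    have hb : β⁻¹ * β = 1 := inv_mul_cancel₀ hβ
    have : (β⁻¹ * (1 - α)) • (α • e + β • x e) = (β⁻¹ * (1 - α) * α) • e + (1 - α) • x e := by
      rw [smul_add, smul_smul, smul_smul]
      congr 2
      linear_combination (1 - α) * hb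
    rw [this]; module
  have h1 := hzz e
  rw [hze, map_sub, map_smul, map_smul, hγ, hze] at h1
  have h4 := (hi1 ((1-α)*(1-α) - (1+β)*γ - (1-α)) (-((1-α) * (1+β)) - (1+β)*(2+α) + (1+β)) (by
    rw [← sub_eq_zero] at h1
    rw [← h1]; module)).2
  have hb : 1 + β = 0 := by
    have : 2 * (1 + β) = 0 := by linear_combination -h4
    exact (mul_eq_zero.1 this).resolve_left h2
  rw [hb, zero_smul, sub_zero] at hze
  have := hi3 (-(1-α)) 1 (by rw [hze]; module)
  simp at this

lemma trace_idem {F : Type*} [Field F] {n : ℕ} (E : Matrix (Fin n) (Fin n) F) (hE : E * E = E) :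
    ∃ k : ℕ, E.trace = k := by
  have h : IsIdempotentElem (Matrix.toLin' E) := by
    rw [IsIdempotentElem, Module.End.mul_eq_comp, ← Matrix.toLin'_mul, hE]
  have h' := (LinearMap.isProj_range_iff_isIdempotentElem _).2 h
  refine ⟨finrank F (LinearMap.range (Matrix.toLin' E)), ?_⟩
  rw [← h'.trace, Matrix.trace_toLin'_eq]

lemma main_rev (F : Type*) [Field F] (n : ℕ) (hn : 1 ≤ n)
    (H : ∀ A : Matrix (Fin n) (Fin n) F, IsUnit A →
        ∃ E₁ E₂ E₃ : Matrix (Fin n) (Fin n) F,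
          E₁ * E₁ = E₁ ∧ E₂ * E₂ = E₂ ∧ E₃ * E₃ = E₃ ∧ A = E₁ + E₂ + E₃) :
    Nonempty (F ≃+* ZMod 2) ∨ Nonempty (F ≃+* ZMod 3) := by
  obtain ⟨m, rfl⟩ : ∃ m, n = m + 1 := ⟨n - 1, by omega⟩
  have hiso : ∀ p : ℕ, p.Prime → (p : F) = 0 → (∀ a : F, ∃ k : ℕ, a = k) →
      Nonempty (F ≃+* ZMod p) := by
    intro p hp h0 hs
    have := Fact.mk hp
    have : CharP F p := ringChar.of_eq (CharP.ringChar_of_prime_eq_zero hp h0)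
    refine ⟨(RingEquiv.ofBijective (ZMod.castHom (dvd_refl p) F) ⟨RingHom.injective _, ?_⟩).symm⟩
    intro a
    obtain ⟨k, rfl⟩ := hs a
    exact ⟨k, by simp⟩
  by_cases h2 : (2:F) = 0
  · left
    refine hiso 2 Nat.prime_two (by exact_mod_cast h2) fun a => ?_
    by_cases ha : a = 0
    · exact ⟨0, by simp [ha]⟩
    obtain ⟨x, y, z, hx, hy, hz, h⟩ := H (Matrix.diagonal fun i => if i = 0 then a else 1) (by
      rw [Matrix.isUnit_diagonal, Pi.isUnit_iff]
      intro i
      rw [isUnit_iff_ne_zero]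
      split_ifs <;> simp [ha])
    obtain ⟨k1, h1⟩ := trace_idem x hx
    obtain ⟨k2, h2'⟩ := trace_idem y hy
    obtain ⟨k3, h3⟩ := trace_idem z hz
    have := congrArg Matrix.trace h
    rw [Matrix.trace_add, Matrix.trace_add, h1, h2', h3, Matrix.trace_diagonal,
      Fin.sum_univ_succ] at this
    simp at this
    refine ⟨k1 + k2 + k3 + m, ?_⟩
    push_cast
    linear_combination this - m * h2
  have hsc : ∀ a : F, a ≠ 0 → a = 1 ∨ a = 2 ∨ a = 3 ∨ 2 * a = 3 := by
    intro a ha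
    by_contra hcon
    push Not at hcon
    obtain ⟨x, y, z, hx, hy, hz, h⟩ := H (algebraMap F _ a) ((IsUnit.mk0 a ha).map _)
    exact scalar_aux h2 a ha hcon.1 hcon.2.1 hcon.2.2.1 hcon.2.2.2 x y z hx hy hz h
  by_cases h3 : (3:F) = 0
  · right
    refine hiso 3 Nat.prime_three (by exact_mod_cast h3) fun a => ?_
    by_cases ha : a = 0
    · exact ⟨0, by simp [ha]⟩
    rcases hsc a ha with h | h | h | h
    · exact ⟨1, by simp [h]⟩
    · exact ⟨2, by simp [h]⟩
    · exact ⟨3, by simp [h]⟩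
    · rw [h3] at h
      exact absurd ((mul_eq_zero.1 h).resolve_left h2) ha
  exfalso
  have h4 : (4:F) ≠ 0 := by
    have : (4:F) = 2 * 2 := by norm_num
    rw [this]; exact mul_ne_zero h2 h2
  have h5 : (5:F) = 0 := by
    rcases hsc 4 h4 with h | h | h | h
    · exact absurd (by linear_combination h) h3
    · exact absurd (by linear_combination h) h2
    · exact absurd (by linear_combination h) (one_ne_zero (α := F))
    · linear_combination h
  let Φ := (Matrix.toLinAlgEquiv' : Matrix (Fin (m+1)) (Fin (m+1)) F ≃ₐ[F] _)
  rcases Nat.even_or_odd (m+1) with hev | hodd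
  · obtain ⟨x, y, z, hx, hy, hz, h⟩ := H (Matrix.diagonal fun i => if i = 0 then 1 else 4) (by
      rw [Matrix.isUnit_diagonal, Pi.isUnit_iff]
      intro i
      rw [isUnit_iff_ne_zero]
      split_ifs <;> simp [h4])
    refine five_even h2 h3 h5 (Φ x) (Φ y) (Φ z) (Pi.single 0 1) (LinearMap.proj 0) (by simp)
      (by rw [← map_mul, hx]) (by rw [← map_mul, hy]) (by rw [← map_mul, hz]) ?_ (by simpa using hev)
    intro v
    rw [← LinearMap.add_apply, ← LinearMap.add_apply, ← map_add, ← map_add, ← h]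
    simp only [Φ, Matrix.toLinAlgEquiv'_apply]
    ext i
    rw [Matrix.mulVec_diagonal]
    by_cases hi : i = 0
    · subst hi
      simp
      linear_combination (-v 0) * h5
    · simp [hi]
  · obtain ⟨x, y, z, hx, hy, hz, h⟩ := H (algebraMap F _ 4) ((IsUnit.mk0 4 h4).map _)
    have := five_odd h2 h3 h5 (Φ x) (Φ y) (Φ z)
      (by rw [← map_mul, hx]) (by rw [← map_mul, hy]) (by rw [← map_mul, hz])
      (by rw [← map_add, ← map_add, ← h, AlgEquiv.commutes, Algebra.algebraMap_eq_smul_one])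
    rw [Module.finrank_fin_fun] at this
    exact (Nat.not_even_iff_odd.2 hodd) this



/-- For a field `F` and `n ≥ 1`, the following are equivalent:
(1) every matrix in `M_n(F)` is a sum of three idempotents;
(2) every invertible matrix in `M_n(F)` is a sum of three idempotents;
(3) `F ≅ ℤ/2` or `F ≅ ℤ/3`. -/
theorem matrix_sum_three_idempotents_field_tfae (F : Type*) [Field F] (n : ℕ) (hn : 1 ≤ n) :
    List.TFAE [
      ∀ A : Matrix (Fin n) (Fin n) F,
        ∃ E₁ E₂ E₃ : Matrix (Fin n) (Fin n) F,
          E₁ * E₁ = E₁ ∧ E₂ * E₂ = E₂ ∧ E₃ * E₃ = E₃ ∧ A = E₁ + E₂ + E₃,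
      ∀ A : Matrix (Fin n) (Fin n) F, IsUnit A →
        ∃ E₁ E₂ E₃ : Matrix (Fin n) (Fin n) F,
          E₁ * E₁ = E₁ ∧ E₂ * E₂ = E₂ ∧ E₃ * E₃ = E₃ ∧ A = E₁ + E₂ + E₃,
      Nonempty (F ≃+* ZMod 2) ∨ Nonempty (F ≃+* ZMod 3)] := by
  tfae_have 1 → 2 := fun h A _ => h A
  tfae_have 2 → 3 := main_rev F n hn
  tfae_have 3 → 1 := by
    intro h A
    refine sumThree_matrix ?_ n A
    rcases h with ⟨⟨g⟩⟩ | ⟨⟨g⟩⟩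
    · intro a
      have : ∀ t : ZMod 2, t = 0 ∨ t = 1 ∨ t = 2 := by decide
      rcases this (g a) with h | h | h
      · exact Or.inl (g.injective (by rw [h, map_zero]))
      · exact Or.inr (Or.inl (g.injective (by rw [h, map_one])))
      · exact Or.inr (Or.inr (g.injective (by rw [h, map_ofNat])))
    · intro a
      have : ∀ t : ZMod 3, t = 0 ∨ t = 1 ∨ t = 2 := by decide
      rcases this (g a) with h | h | h
      · exact Or.inl (g.injective (by rw [h, map_zero]))
      · exact Or.inr (Or.inl (g.injective (by rw [h, map_one])))
      · exact Or.inr (Or.inr (g.injective (by rw [h, map_ofNat])))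
  tfae_finish
end

section
/- Let R be an integral domain and n ≥ 1. Then every matrix in M_n(R) is a sum of three idempotent matrices if and only if R is isomorphic to Z_2 or to Z_3. -/
/-- The trace of an idempotent matrix over a domain is a natural number. -/
theorem trace_idem_nat {R : Type*} [CommRing R] [IsDomain R] {n : ℕ}
    (E : Matrix (Fin n) (Fin n) R) (hE : E * E = E) : ∃ k : ℕ, E.trace = (k : R) := by
  let K := FractionRing R
  let E' : Matrix (Fin n) (Fin n) K := E.map (algebraMap R K)
  have hE' : E' * E' = E' := by
    simp only [E']
    rw [← Matrix.map_mul, hE]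
  have hid : IsIdempotentElem (Matrix.toLin' E') := by
    unfold IsIdempotentElem
    rw [Module.End.mul_eq_comp, ← Matrix.toLin'_mul, hE']
  have ht := (LinearMap.IsIdempotentElem.isProj_range _ hid).trace
  rw [Matrix.trace_toLin'_eq] at ht
  refine ⟨_, IsFractionRing.injective R K (?_ : _ = algebraMap R K ((Module.finrank K (LinearMap.range (Matrix.toLin' E')) : ℕ) : R))⟩
  rw [map_natCast, ← ht]
  simp [E', Matrix.trace, map_sum]

/-- Key anticommutation facts for two idempotents. -/
theorem idem_anticomm {A : Type*} [Ring A] {P Q : A} (hP : P * P = P) (hQ : Q * Q = Q) :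
    (P + Q - 1) * (P - Q) = -((P - Q) * (P + Q - 1)) := by
  simp only [mul_sub, sub_mul, mul_add, add_mul, hP, hQ, mul_one, one_mul]
  abel

theorem idem_sq {A : Type*} [Ring A] {P Q : A} (hP : P * P = P) (hQ : Q * Q = Q) :
    (P - Q) * (P - Q) = 1 - (P + Q - 1) * (P + Q - 1) := by
  simp only [mul_sub, sub_mul, mul_add, add_mul, hP, hQ, mul_one, one_mul]
  abel

/-- Scalar matrix `4` is not a sum of three idempotents when `5` and `24` are nonzero. -/
theorem four_not {K : Type*} [Field K] (h5 : (5 : K) ≠ 0) (h24 : (24 : K) ≠ 0)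
    {A : Type*} [Ring A] [Nontrivial A] [Algebra K A] {E P Q : A}
    (hE : E * E = E) (hP : P * P = P) (hQ : Q * Q = Q) (h : (4 : A) = E + P + Q) : False := by
  -- `E` commutes with `P`
  have key : ∀ {E P Q : A}, E * E = E → P * P = P → Q * Q = Q → (4 : A) = E + P + Q →
      E * P = P * E := by
    intro E P Q hE hP hQ h
    have e1 : P + Q - 1 = 3 - E := by
      have : P + Q = 4 - E := by rw [h]; abel
      rw [this]; grind
    have ha := idem_anticomm hP hQ
    rw [e1] at ha
    have hc : (3 - E) * (3 - E) = 9 - 5 * E := by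
      have h3 : (3 : A) = (3 : ℤ) • 1 := by simp
      have h9 : (9 : A) = (9 : ℤ) • 1 := by simp
      have : (3 - E) * (3 - E) = 9 - 6 * E + E * E := by
        rw [h3, h9]; noncomm_ring
      rw [this, hE]; noncomm_ring
    have hcomm : (9 - 5 * E) * (P - Q) = (P - Q) * (9 - 5 * E) := by
      rw [← hc, mul_assoc, ha, mul_neg, ← mul_assoc, ha, neg_mul, neg_neg, mul_assoc]
    have hQ' : Q = 4 - E - P := by rw [h]; abel
    have h2 : (10 : K) • (E * P) = (10 : K) • (P * E) := by
      have : P - Q = 2 * P + E - 4 := by rw [hQ']; noncomm_ring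
      rw [this] at hcomm
      have h3 : (10 : A) * (E * P) = (10 : A) * (P * E) := by
        have h4 : (4 : A) = (4 : ℤ) • 1 := by simp
        have h9 : (9 : A) = (9 : ℤ) • 1 := by simp
        have h0 := sub_eq_zero.2 hcomm
        rw [← sub_eq_zero, ← neg_eq_zero, ← h0, h4, h9]
        noncomm_ring
      rw [Algebra.smul_def, Algebra.smul_def, map_ofNat]
      exact h3
    have h10 : (10 : K) ≠ 0 := by
      intro h0
      have h2' : (2 : K) ≠ 0 := by
        intro h; apply h24; linear_combination 12 * h
      apply h5
      exact (mul_eq_zero.1 (show (2 : K) * 5 = 0 by linear_combination h0)).resolve_left h2'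
    exact smul_right_injective A h10 h2
  have cEP := key hE hP hQ h
  have cEQ := key hE hQ hP (by rw [h]; abel)
  have cPQ := key hP hQ hE (by rw [h]; abel)
  have hQ' : Q = 4 - E - P := by rw [h]; abel
  -- multiply out
  have hEPQ : Q * (E * P) = 2 * (E * P) := by
    rw [hQ']
    have : P * (E * P) = E * P := by rw [← mul_assoc, ← cEP, mul_assoc, hP]
    have h2 : E * (E * P) = E * P := by rw [← mul_assoc, hE]
    rw [sub_mul, sub_mul, this, h2]; noncomm_ring
  have aux : ∀ (x : A) (k : ℕ) (c : K), c ≠ 0 → (k : K) = c → (k : A) * x = 0 → x = 0 := by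
    intro x k c hc hk h0
    rw [← map_natCast (algebraMap K A), ← Algebra.smul_def, hk] at h0
    exact (smul_eq_zero.1 h0).resolve_left hc
  have h2' : (2 : K) ≠ 0 := by
    intro h; apply h24; linear_combination 12 * h
  have h3' : (3 : K) ≠ 0 := by
    intro h; apply h24; linear_combination 8 * h
  have h4' : (4 : K) ≠ 0 := by
    intro h; apply h24; linear_combination 6 * h
  have gen : ∀ {E P Q : A}, E * E = E → P * P = P → Q * Q = Q → (4 : A) = E + P + Q →
      E * P = P * E → E * P = 0 := by
    intro E P Q hE hP hQ h c
    have hQ' : Q = 4 - E - P := by rw [h]; abel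
    have hEPQ : Q * (E * P) = 2 * (E * P) := by
      rw [hQ']
      have : P * (E * P) = E * P := by rw [← mul_assoc, ← c, mul_assoc, hP]
      have h2 : E * (E * P) = E * P := by rw [← mul_assoc, hE]
      rw [sub_mul, sub_mul, this, h2]; noncomm_ring
    have h4 : Q * (Q * (E * P)) = 2 * (2 * (E * P)) := by
      rw [hEPQ]
      have : Q * (2 * (E * P)) = 2 * (Q * (E * P)) := by noncomm_ring
      rw [this, hEPQ]
    rw [← mul_assoc, hQ, hEPQ] at h4
    apply aux _ 2 2 h2' (by norm_num)
    have := sub_eq_zero.2 h4.symm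
    rw [← this]; push_cast; noncomm_ring
  have EP := gen hE hP hQ h cEP
  have EQ := gen hE hQ hP (by rw [h]; abel) cEQ
  have PQ := gen hP hQ hE (by rw [h]; abel) cPQ
  have z : ∀ {E P Q : A}, E * E = E → (4 : A) = E + P + Q → E * P = 0 → E * Q = 0 → E = 0 := by
    intro E P Q hE h hp hq
    apply aux _ 3 3 h3' (by norm_num)
    have : E * 4 = E := by rw [h, mul_add, mul_add, hE, hp, hq]; simp
    have := sub_eq_zero.2 this
    rw [← this]; push_cast; noncomm_ring
  have E0 := z hE h EP EQ
  have P0 := z hP (by rw [h]; abel) PQ (by rw [← cEP]; exact EP)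
  have Q0 := z hQ (P := E) (Q := P) (by rw [h]; abel) (by rw [← cEQ]; exact EQ) (by rw [← cPQ]; exact PQ)
  rw [E0, P0, Q0] at h
  have := aux (1 : A) 4 4 h4' (by norm_num) (by simpa using h)
  exact one_ne_zero this

/-- Characteristic five, odd size. -/
theorem neg_one_not {K : Type*} [Field K] (h5 : (5 : K) = 0) {n : ℕ} (hn : Odd n)
    (E P Q : Matrix (Fin n) (Fin n) K)
    (hE : E * E = E) (hP : P * P = P) (hQ : Q * Q = Q) (h : -1 = E + P + Q) : False := by
  have h2 : (2 : K) ≠ 0 := by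
    intro h; have : (1 : K) = 0 := by linear_combination h5 - 2 * h
    exact one_ne_zero this
  have e1 : P + Q - 1 = -2 - E := by
    have : P + Q = -1 - E := by rw [h]; abel
    rw [this]; grind
  have h5' : (5 : Matrix (Fin n) (Fin n) K) = 0 := by
    rw [← map_ofNat (algebraMap K _) 5, h5, map_zero]
  have hS : (P + Q - 1) * (P + Q - 1) = 4 := by
    rw [e1]
    have : (-2 - E) * (-2 - E) = 4 + 4 * E + E * E := by grind
    rw [this, hE]
    have : 4 + 4 * E + E = 4 + 5 * E := by noncomm_ring
    rw [this, h5', zero_mul, add_zero]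
  have hC := idem_sq hP hQ
  rw [hS] at hC
  have hC' : (P - Q) * (P - Q) = algebraMap K _ 2 := by
    rw [hC, map_ofNat, ← sub_eq_zero, ← neg_eq_zero, ← h5']; norm_num
  have hS' : (P + Q - 1) * (P + Q - 1) = algebraMap K _ 4 := by rw [hS, map_ofNat]
  have dC : (P - Q).det ≠ 0 := by
    intro h0
    have := congrArg Matrix.det hC'
    rw [Matrix.det_mul, h0, Matrix.algebraMap_eq_diagonal, Matrix.det_diagonal] at this
    simp at this
    exact h2 (pow_eq_zero_iff hn.pos.ne' |>.1 this.symm)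
  have dS : (P + Q - 1).det ≠ 0 := by
    intro h0
    have := congrArg Matrix.det hS'
    rw [Matrix.det_mul, h0, Matrix.algebraMap_eq_diagonal, Matrix.det_diagonal] at this
    simp at this
    apply h2
    have h4 := pow_eq_zero_iff hn.pos.ne' |>.1 this.symm
    exact pow_eq_zero_iff (two_ne_zero) |>.1 (by linear_combination h4 : (2 : K) ^ 2 = 0)
  have := congrArg Matrix.det (idem_anticomm hP hQ)
  rw [Matrix.det_neg, Matrix.det_mul, Matrix.det_mul] at this
  simp [hn.neg_one_pow] at this
  have : 2 * ((P + Q - 1).det * (P - Q).det) = 0 := by linear_combination this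
  simp [h2, dC, dS] at this

theorem rank_ineq {K V : Type*} [Field K] (h5 : (5 : K) = 0) [AddCommGroup V] [Module K V]
    [FiniteDimensional K V] (E P Q : Module.End K V)
    (hE : E * E = E) (hP : P * P = P) (hQ : Q * Q = Q) (f : V →ₗ[K] K) (e : V)
    (hfe : f e ≠ 1) (h : ∀ v, E v + P v + Q v = -v + f v • e) :
    Module.finrank K (LinearMap.range E) ≤ Module.finrank K (LinearMap.ker E) + 1 := by
  have h2 : (2 : K) ≠ 0 := by
    intro h; have : (1 : K) = 0 := by linear_combination h5 - 2 * h
    exact one_ne_zero this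
  have drop : ∀ U : Submodule K V, Module.finrank K U ≤
      Module.finrank K (U ⊓ LinearMap.ker f : Submodule K V) + 1 := by
    intro U
    have h1 := LinearMap.finrank_range_add_finrank_ker (f.domRestrict U)
    have h3 : Module.finrank K (LinearMap.range (f.domRestrict U)) ≤ 1 := by
      simpa using Submodule.finrank_le (LinearMap.range (f.domRestrict U))
    have h4 : Module.finrank K (LinearMap.ker (f.domRestrict U)) =
        Module.finrank K (U ⊓ LinearMap.ker f : Submodule K V) := by
      rw [← Submodule.map_comap_subtype, ← (Submodule.equivSubtypeMap U _).finrank_eq]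
      rfl
    omega
  set S : Module.End K V := P + Q - 1 with hSdef
  have hSv : ∀ v, S v = - (2 : K) • v - E v + f v • e := by
    intro v
    have := h v
    have h' : P v + Q v = -v + f v • e - E v := by rw [← this]; abel
    simp only [hSdef, LinearMap.sub_apply, LinearMap.add_apply, Module.End.one_apply, h']
    module
  let T : Submodule K V := LinearMap.ker (S + (2 : K) • (1 : Module.End K V))
  have memT : ∀ v, v ∈ T ↔ E v = f v • e := by
    intro v
    simp only [T, LinearMap.mem_ker, LinearMap.add_apply, LinearMap.smul_apply,
      Module.End.one_apply, hSv]
    rw [← sub_eq_zero (a := E v), ← neg_eq_zero (a := E v - _)]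
    constructor <;> intro h <;> rw [← h] <;> module
  have hT : Module.finrank K T ≤ Module.finrank K (LinearMap.ker E) := by
    by_cases hc : LinearMap.ker E ≤ LinearMap.ker f
    · apply Submodule.finrank_mono
      intro v hv
      have hv' := (memT v).1 hv
      have h1 : f (v - E v) = 0 := by
        apply hc
        rw [LinearMap.mem_ker, map_sub, ← Module.End.mul_apply, hE, sub_self]
      rw [hv', map_sub, map_smul, smul_eq_mul] at h1
      have : f v * (1 - f e) = 0 := by linear_combination h1
      have : f v = 0 := (mul_eq_zero.1 this).resolve_right (sub_ne_zero.2 hfe.symm)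
      rw [LinearMap.mem_ker, hv', this, zero_smul]
    · have h1 := drop T
      have h3 : Module.finrank K (T ⊓ LinearMap.ker f : Submodule K V) ≤
          Module.finrank K (LinearMap.ker E ⊓ LinearMap.ker f : Submodule K V) := by
        apply Submodule.finrank_mono
        rintro v ⟨hv, hf⟩
        refine ⟨?_, hf⟩
        have hv' := (memT v).1 hv
        rw [LinearMap.mem_ker.1 hf, zero_smul] at hv'
        exact hv'
      have h4 : Module.finrank K (LinearMap.ker E ⊓ LinearMap.ker f : Submodule K V) <
          Module.finrank K (LinearMap.ker E) :=
        Submodule.finrank_lt_finrank_of_lt (inf_lt_left.2 hc)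
      omega
  have hU := drop (LinearMap.range E)
  have hUT : Module.finrank K (LinearMap.range E ⊓ LinearMap.ker f : Submodule K V) ≤
      Module.finrank K T := by
    have hSU : ∀ v ∈ (LinearMap.range E ⊓ LinearMap.ker f : Submodule K V), S v = (2 : K) • v := by
      rintro v ⟨⟨w, rfl⟩, hf⟩
      rw [hSv, LinearMap.mem_ker.1 hf, ← Module.End.mul_apply, hE]
      have : (-3 : K) = 2 := by linear_combination -h5
      rw [← sub_eq_zero]
      have h3 : -(2 : K) • E w - E w + (0 : K) • e - (2 : K) • E w = -((5 : K) • E w) := by module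
      rw [h3, h5, zero_smul, neg_zero]
    have ha := idem_anticomm hP hQ
    have hs := idem_sq hP hQ
    have maps : ∀ v ∈ (LinearMap.range E ⊓ LinearMap.ker f : Submodule K V), (P - Q) v ∈ T := by
      intro v hv
      have := LinearMap.congr_fun ha v
      rw [Module.End.mul_apply, LinearMap.neg_apply, Module.End.mul_apply, ← hSdef, hSU v hv] at this
      simp only [T, LinearMap.mem_ker, LinearMap.add_apply (M := V), LinearMap.smul_apply,
        Module.End.one_apply]
      rw [this, map_smul]; simp
    refine LinearMap.finrank_le_finrank_of_injective (f := (P - Q).restrict maps) ?_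
    rw [← LinearMap.ker_eq_bot, LinearMap.ker_eq_bot']
    rintro ⟨v, hv⟩ h0
    have h0' : (P - Q) v = 0 := congrArg Subtype.val h0
    have h1 := LinearMap.congr_fun hs v
    rw [Module.End.mul_apply, h0', map_zero, LinearMap.sub_apply, Module.End.mul_apply, ← hSdef,
      hSU v hv, map_smul, hSU v hv, Module.End.one_apply, smul_smul] at h1
    have : (2 : K) • v = 0 := by
      rw [h1]
      have : (2 : K) = 1 - 2 * 2 := by linear_combination h5
      nth_rw 1 [this]
      module
    have := (smul_eq_zero.1 this).resolve_left h2
    simpa using this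
  omega

theorem rank_eq {K V : Type*} [Field K] (h5 : (5 : K) = 0) [AddCommGroup V] [Module K V]
    [FiniteDimensional K V] (hev : Even (Module.finrank K V)) (E P Q : Module.End K V)
    (hE : E * E = E) (hP : P * P = P) (hQ : Q * Q = Q) (f : V →ₗ[K] K) (e : V)
    (hfe : f e ≠ 1) (hfe' : f e ≠ -1) (h : ∀ v, E v + P v + Q v = -v + f v • e) :
    2 * Module.finrank K (LinearMap.range E) = Module.finrank K V := by
  have a := rank_ineq h5 E P Q hE hP hQ f e hfe h
  have hE1 : (1 - E) * (1 - E) = 1 - E := by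
    simp only [mul_sub, sub_mul, hE, mul_one, one_mul]; abel
  have b := rank_ineq h5 (1 - E) (1 - P) (1 - Q) hE1
    (by simp only [mul_sub, sub_mul, hP, mul_one, one_mul]; abel)
    (by simp only [mul_sub, sub_mul, hQ, mul_one, one_mul]; abel) f (-e)
    (by rw [map_neg]; intro h; apply hfe'; rw [← h, neg_neg])
    (by
      intro v
      have := h v
      simp only [LinearMap.sub_apply, Module.End.one_apply]
      have h1 : v - E v + (v - P v) + (v - Q v) = (3 : K) • v - (E v + P v + Q v) := by module
      rw [h1, this]
      have : (-1 : K) = 4 := by linear_combination -h5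
      have h2 : -v = (4 : K) • v := by rw [← this]; module
      nth_rw 2 [h2]
      module)
  have c := LinearMap.finrank_range_add_finrank_ker E
  have d := LinearMap.finrank_range_add_finrank_ker (1 - E)
  have h1 : LinearMap.ker (1 - E) ≤ LinearMap.range E := by
    intro v hv
    rw [LinearMap.mem_ker, LinearMap.sub_apply, sub_eq_zero] at hv
    exact ⟨v, hv.symm⟩
  have := Submodule.finrank_mono h1
  have h3 : LinearMap.ker E ≤ LinearMap.range (1 - E) := by
    intro v hv
    exact ⟨v, by rw [LinearMap.sub_apply, LinearMap.mem_ker.1 hv]; simp⟩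
  have := Submodule.finrank_mono h3
  obtain ⟨m, hm⟩ := hev
  omega

theorem even_not {K : Type*} [Field K] (h5 : (5 : K) = 0) {n : ℕ} (hn : Even n) (i₀ : Fin n)
    (E P Q : Matrix (Fin n) (Fin n) K)
    (hE : E * E = E) (hP : P * P = P) (hQ : Q * Q = Q)
    (h : -1 + Matrix.single i₀ i₀ 2 = E + P + Q) : False := by
  have h1 : (1 : K) ≠ 0 := one_ne_zero
  have lin : ∀ {E : Matrix (Fin n) (Fin n) K}, E * E = E →
      Matrix.toLin' E * Matrix.toLin' E = Matrix.toLin' E := by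
    intro E hE
    rw [Module.End.mul_eq_comp, ← Matrix.toLin'_mul, hE]
  have main : ∀ {E P Q : Matrix (Fin n) (Fin n) K}, E * E = E → P * P = P → Q * Q = Q →
      -1 + Matrix.single i₀ i₀ 2 = E + P + Q → 2 * E.trace = (n : K) := by
    intro E P Q hE hP hQ h
    have := rank_eq h5 (V := Fin n → K) (by simpa using hn) _ _ _ (lin hE) (lin hP) (lin hQ)
      (LinearMap.proj i₀) (Pi.single i₀ 2)
      (by simp; intro h; apply h1; linear_combination h)
      (by simp; intro h; apply h1; linear_combination 2 * h - h5)
      (by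
        intro v
        rw [← LinearMap.add_apply, ← LinearMap.add_apply, ← map_add, ← map_add, ← h]
        ext i
        simp [Matrix.single_mulVec, Pi.single_apply,
          Function.update_apply, mul_comm])
    have ht := (LinearMap.IsIdempotentElem.isProj_range _ (lin hE)).trace
    rw [Matrix.trace_toLin'_eq] at ht
    rw [ht]
    have h2 := congrArg (Nat.cast : ℕ → K) this
    simpa using h2
  have a := main hE hP hQ h
  have b := main hP hQ hE (by rw [h]; abel)
  have c := main hQ hE hP (by rw [h]; abel)
  have t := congrArg Matrix.trace h
  simp [Matrix.trace_add, Matrix.trace_neg] at t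
  apply h1
  linear_combination (1 - n) * h5 - 2 * t - a - b - c

theorem forward (R : Type*) [CommRing R] [IsDomain R] (n : ℕ) (hn : 1 ≤ n)
    (H : ∀ A : Matrix (Fin n) (Fin n) R,
      ∃ E₁ E₂ E₃ : Matrix (Fin n) (Fin n) R,
        E₁ * E₁ = E₁ ∧ E₂ * E₂ = E₂ ∧ E₃ * E₃ = E₃ ∧ A = E₁ + E₂ + E₃) :
    (Nonempty (R ≃+* ZMod 2) ∨ Nonempty (R ≃+* ZMod 3)) := by
  let i₀ : Fin n := ⟨0, hn⟩
  have : Nonempty (Fin n) := ⟨i₀⟩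
  have nat : ∀ r : R, ∃ k : ℕ, r = k := by
    intro r
    obtain ⟨E, P, Q, hE, hP, hQ, h⟩ := H (Matrix.single i₀ i₀ r)
    obtain ⟨a, ha⟩ := trace_idem_nat E hE
    obtain ⟨b, hb⟩ := trace_idem_nat P hP
    obtain ⟨c, hc⟩ := trace_idem_nat Q hQ
    refine ⟨a + b + c, ?_⟩
    have := congrArg Matrix.trace h
    rw [Matrix.trace_add, Matrix.trace_add, ha, hb, hc] at this
    simpa using this
  obtain ⟨p, hp⟩ := CharP.exists R
  have hp0 : p ≠ 0 := by
    rintro rfl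
    obtain ⟨k, hk⟩ := nat (-1)
    have : ((k + 1 : ℕ) : R) = 0 := by push_cast; rw [← hk]; ring
    rw [CharP.cast_eq_zero_iff R 0] at this
    simp at this
  have hpp : p.Prime := (CharP.char_is_prime_or_zero R p).resolve_right hp0
  have : Fact p.Prime := ⟨hpp⟩
  have hbij : Function.Bijective (ZMod.castHom (dvd_refl p) R) := by
    refine ⟨RingHom.injective _, fun r => ?_⟩
    obtain ⟨k, rfl⟩ := nat r
    exact ⟨k, by simp⟩
  let φ : ZMod p ≃+* R := RingEquiv.ofBijective _ hbij
  have H' : ∀ A : Matrix (Fin n) (Fin n) (ZMod p),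
      ∃ E₁ E₂ E₃ : Matrix (Fin n) (Fin n) (ZMod p),
        E₁ * E₁ = E₁ ∧ E₂ * E₂ = E₂ ∧ E₃ * E₃ = E₃ ∧ A = E₁ + E₂ + E₃ := by
    intro A
    obtain ⟨E, P, Q, hE, hP, hQ, h⟩ := H (φ.mapMatrix A)
    refine ⟨φ.symm.mapMatrix E, φ.symm.mapMatrix P, φ.symm.mapMatrix Q, ?_, ?_, ?_, ?_⟩
    · rw [← map_mul, hE]
    · rw [← map_mul, hP]
    · rw [← map_mul, hQ]
    · rw [← map_add, ← map_add, ← h]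
      ext i j; simp
  by_cases h2 : p = 2
  · subst h2; exact Or.inl ⟨φ.symm⟩
  by_cases h3 : p = 3
  · subst h3; exact Or.inr ⟨φ.symm⟩
  exfalso
  by_cases h5 : p = 5
  · subst h5
    have h5' : (5 : ZMod 5) = 0 := by exact_mod_cast ZMod.natCast_self 5
    rcases Nat.even_or_odd n with he | ho
    · obtain ⟨E, P, Q, hE, hP, hQ, h⟩ := H' (-1 + Matrix.single i₀ i₀ 2)
      exact even_not h5' he i₀ E P Q hE hP hQ h
    · obtain ⟨E, P, Q, hE, hP, hQ, h⟩ := H' (-1)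
      exact neg_one_not h5' ho E P Q hE hP hQ h
  · obtain ⟨E, P, Q, hE, hP, hQ, h⟩ := H' 4
    refine four_not (K := ZMod p) ?_ ?_ hE hP hQ h
    · intro h0
      have : ((5 : ℕ) : ZMod p) = 0 := by exact_mod_cast h0
      rw [ZMod.natCast_eq_zero_iff] at this
      exact h5 ((Nat.prime_dvd_prime_iff_eq hpp Nat.prime_five).1 this)
    · intro h0
      have : ((2 ^ 3 * 3 : ℕ) : ZMod p) = 0 := by exact_mod_cast h0
      rw [ZMod.natCast_eq_zero_iff] at this
      rcases (Nat.Prime.dvd_mul hpp).1 this with h | h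
      · exact h2 ((Nat.prime_dvd_prime_iff_eq hpp Nat.prime_two).1 (hpp.dvd_of_dvd_pow h))
      · exact h3 ((Nat.prime_dvd_prime_iff_eq hpp Nat.prime_three).1 h)


/-- An endomorphism which is a sum of three idempotents. -/
def SumThreeIdem {K V : Type*} [Field K] [AddCommGroup V] [Module K V]
    (φ : Module.End K V) : Prop :=
  ∃ E P Q : Module.End K V, E * E = E ∧ P * P = P ∧ Q * Q = Q ∧ φ = E + P + Q

theorem SumThreeIdem.of_basis {K V : Type*} [Field K] [AddCommGroup V] [Module K V] (m : ℕ)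
    (b : Module.Basis (Fin (m + 2)) K V) (φ : Module.End K V) (s t : K) (hs : s * s = s)
    (ht : t * t = t)
    (hφ : ∀ (i : ℕ) (h : i + 1 < m + 2), φ (b ⟨i, by omega⟩) =
      b ⟨i + 1, h⟩ + (if i = 0 then s else 1) • b ⟨i, by omega⟩)
    (hlast : b.repr (φ (b (Fin.last (m + 1)))) (Fin.last (m + 1)) = 2 + t) :
    SumThreeIdem φ := by
  let g : ∀ i : Fin (m + 2), V := fun i =>
    if h : i.1 + 1 < m + 2 then b ⟨i.1 + 1, h⟩ else t • b i
  let E : Module.End K V := b.constr K fun i => if Even i.1 then g i else b i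
  let P : Module.End K V := b.constr K fun i =>
    if Even i.1 then (if i.1 = 0 then s else 1) • b i else g i
  let w : V := φ (b (Fin.last (m + 1))) - (1 + t) • b (Fin.last (m + 1))
  let Q : Module.End K V := b.constr K fun i => if i = Fin.last (m + 1) then w else 0
  have hEb : ∀ i, E (b i) = if Even i.1 then g i else b i := fun i => by
    simp only [E, Module.Basis.constr_basis]
  have hPb : ∀ i, P (b i) = if Even i.1 then (if i.1 = 0 then s else 1) • b i else g i :=
    fun i => by simp only [P, Module.Basis.constr_basis]
  have hQb : ∀ i, Q (b i) = if i = Fin.last (m + 1) then w else 0 := fun i => by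
    simp only [Q, Module.Basis.constr_basis]
  refine ⟨E, P, Q, ?_, ?_, ?_, ?_⟩
  · refine b.ext fun i => ?_
    rw [Module.End.mul_apply, hEb]
    split_ifs with he
    · by_cases h : i.1 + 1 < m + 2
      · have : ¬ Even (i.1 + 1) := by grind
        simp only [g, h, dif_pos, hEb, this, if_false]
      · simp only [g, h, dif_neg, not_false_eq_true, map_smul, hEb, he, if_true, smul_smul, ht]
    · rw [hEb, if_neg he]
  · refine b.ext fun i => ?_
    rw [Module.End.mul_apply, hPb]
    by_cases he : Even i.1
    · simp only [he, if_true, map_smul, hPb, smul_smul]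
      congr 1
      split_ifs <;> simp [hs]
    · simp only [he, if_false]
      by_cases h : i.1 + 1 < m + 2
      · have : Even (i.1 + 1) := by grind
        have hg : g i = b ⟨i.1 + 1, h⟩ := dif_pos h
        simp [hg, hPb, this]
      · simp only [g, h, dif_neg, not_false_eq_true, map_smul, hPb, he, if_false, smul_smul, ht]
  · have hQ : ∀ v, Q v = b.repr v (Fin.last (m + 1)) • w := by
      intro v
      simp only [Q, Module.Basis.constr_apply_fintype]
      rw [Finset.sum_eq_single (Fin.last (m + 1))]
      · simp
      · intro i _ hi; simp [hi]
      · simp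
    refine LinearMap.ext fun v => ?_
    have hw : b.repr w (Fin.last (m + 1)) = 1 := by
      simp only [w, map_sub, map_smul, Finsupp.sub_apply, Finsupp.smul_apply, hlast]
      simp
      ring
    rw [Module.End.mul_apply, hQ v, map_smul, hQ w, hw, one_smul]
  · refine b.ext fun i => ?_
    rw [LinearMap.add_apply, LinearMap.add_apply, hEb, hPb, hQb]
    by_cases h : i.1 + 1 < m + 2
    · have hi : i ≠ Fin.last (m + 1) := by
        rintro rfl; simp at h
      rw [if_neg hi, add_zero]
      have := hφ i.1 h
      simp only [Fin.eta] at this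
      rw [this]
      have hg : g i = b ⟨i.1 + 1, h⟩ := dif_pos h
      by_cases he : Even i.1
      · simp [he, hg]
      · have : i.1 ≠ 0 := by rintro h0; simp [h0] at he
        simp [he, hg, this]
        abel
    · have hi : i = Fin.last (m + 1) := by
        apply Fin.ext; simp; omega
      subst hi
      have hg : g (Fin.last (m + 1)) = t • b (Fin.last (m + 1)) := dif_neg h
      have h0 : ¬ (Fin.last (m + 1)).1 = 0 := by simp
      rw [hg, if_pos rfl, if_neg h0]
      simp only [w]
      split_ifs with h1
      · module
      · module

theorem SumThreeIdem.of_finrank_le_one {K V : Type*} [Field K] [AddCommGroup V] [Module K V]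
    [FiniteDimensional K V]
    (hK : ∀ c : K, ∃ s t : K, s * s = s ∧ t * t = t ∧ c = s + t + 2) (φ : Module.End K V)
    (h : Module.finrank K V ≤ 1) : SumThreeIdem φ := by
  obtain ⟨v, hv⟩ := finrank_le_one_iff.1 h
  obtain ⟨c, hc⟩ := hv (φ v)
  obtain ⟨s, t, hs, ht, hst⟩ := hK (c + 1)
  refine ⟨s • 1, t • 1, 1, ?_, ?_, one_mul 1, ?_⟩
  · rw [smul_mul_smul_comm, hs, one_mul]
  · rw [smul_mul_smul_comm, ht, one_mul]
  · ext w
    obtain ⟨d, rfl⟩ := hv w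
    rw [map_smul, ← hc]
    have : c = s + t + 1 := by linear_combination hst
    simp only [this, LinearMap.add_apply, LinearMap.smul_apply, Module.End.one_apply]
    module

open Polynomial in
/-- The sequence `1, X - s, (X - s)(X - 1), (X - s)(X - 1)^2, …`. -/
noncomputable def seqST {K : Type*} [Field K] (s : K) : Polynomial.Sequence K where
  elems' i := if i = 0 then 1 else (X - C s) * (X - C 1) ^ (i - 1)
  degree_eq' i := by
    rcases i with _ | i
    · simp
    · simp only [Nat.succ_ne_zero, if_false, Nat.add_sub_cancel]
      rw [degree_mul, degree_pow, degree_X_sub_C, degree_X_sub_C]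
      simp [add_comm]

open Polynomial in
theorem seqST_succ {K : Type*} [Field K] (s : K) (i : ℕ) :
    X * seqST s i = seqST s (i + 1) + (if i = 0 then s else 1) • seqST s i := by
  change X * (if i = 0 then 1 else (X - C s) * (X - C 1) ^ (i - 1)) =
    (if i + 1 = 0 then 1 else (X - C s) * (X - C 1) ^ (i + 1 - 1)) +
    (if i = 0 then s else 1) • (if i = 0 then 1 else (X - C s) * (X - C 1) ^ (i - 1))
  rcases i with _ | i
  · simp [smul_eq_C_mul]
  · simp [pow_succ]
    ring

open Polynomial in
theorem SumThreeIdem.cyclic {K : Type*} [Field K]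
    (hK : ∀ c : K, ∃ s t : K, s * s = s ∧ t * t = t ∧ c = s + t + 2) (f : K[X]) (hf : f ≠ 0) :
    SumThreeIdem (Algebra.lsmul K K (K[X] ⧸ Submodule.span K[X] {f}) (X : K[X])) := by
  set N := K[X] ⧸ Submodule.span K[X] {f} with hN
  have hfr : Module.finrank K N = f.natDegree := finrank_quotient_span_eq_natDegree
  have : FiniteDimensional K N := by
    have := (AdjoinRoot.powerBasis hf).finite
    exact this
  rcases hd : f.natDegree with _ | _ | m
  · exact of_finrank_le_one hK _ (hfr.trans_le (by omega))
  · exact of_finrank_le_one hK _ (hfr.trans_le (by omega))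
  set φ : Module.End K N := Algebra.lsmul K K N (X : K[X])
  obtain ⟨s, t, hs, ht, hst⟩ := hK (LinearMap.trace K N φ - m)
  let π : K[X] →ₗ[K[X]] N := Submodule.mkQ _
  let v : Fin (m + 2) → N := fun i => π (seqST s i)
  have hv : LinearIndependent K v := by
    have hli : LinearIndependent K (fun i : Fin (m + 2) => seqST s (i : ℕ)) :=
      (seqST s).linearIndependent.comp _ Fin.val_injective
    rw [Fintype.linearIndependent_iff] at hli ⊢
    intro g hg
    apply hli
    have h1 : π (∑ i, g i • seqST s (i : ℕ)) = 0 := by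
      rw [← hg, map_sum]
      refine Finset.sum_congr rfl fun i _ => ?_
      exact (π.restrictScalars K).map_smul _ _
    have h2 : f ∣ ∑ i, g i • seqST s (i : ℕ) := by
      rw [← Ideal.mem_span_singleton]
      exact (Submodule.Quotient.mk_eq_zero _).1 h1
    refine eq_zero_of_dvd_of_degree_lt h2 ?_
    rw [degree_eq_natDegree hf, hd]
    rw [← mem_degreeLT]
    refine Submodule.sum_mem _ fun i _ => Submodule.smul_mem _ _ ?_
    rw [mem_degreeLT, (seqST s).degree_eq]
    exact_mod_cast i.2
  let b : Module.Basis (Fin (m + 2)) K N :=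
    basisOfLinearIndependentOfCardEqFinrank hv (by rw [hfr, hd]; simp)
  have hb : ∀ i, b i = π (seqST s (i : ℕ)) := fun i => by
    simp [b, v]
  have hφ : ∀ (i : ℕ) (h : i + 1 < m + 2), φ (b ⟨i, by omega⟩) =
      b ⟨i + 1, h⟩ + (if i = 0 then s else 1) • b ⟨i, by omega⟩ := by
    intro i h
    rw [hb, hb]
    change (X : K[X]) • π (seqST s i) = π (seqST s (i + 1)) + _
    rw [← map_smul, smul_eq_mul, seqST_succ, map_add]
    congr 1
  refine of_basis m b φ s t hs ht hφ ?_
  have htr := LinearMap.trace_eq_matrix_trace K b φ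
  rw [Matrix.trace, Fin.sum_univ_castSucc, Fin.sum_univ_succ] at htr
  simp only [Matrix.diag_apply, LinearMap.toMatrix_apply] at htr
  have e0 : b.repr (φ (b (Fin.castSucc (0 : Fin (m + 1))))) (Fin.castSucc (0 : Fin (m + 1))) = s := by
    have := hφ 0 (by omega)
    change φ (b (Fin.castSucc (0 : Fin (m + 1)))) = _ at this
    rw [this]
    simp [Finsupp.single_apply, Fin.ext_iff]
  have e1 : ∀ i : Fin m, b.repr (φ (b (Fin.castSucc i.succ))) (Fin.castSucc i.succ) = 1 := by
    intro i
    have := hφ (i.1 + 1) (by omega)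
    change φ (b (Fin.castSucc i.succ)) = _ at this
    rw [this]
    simp [Finsupp.single_apply, Fin.ext_iff]
  rw [e0, Finset.sum_congr rfl (fun i _ => e1 i)] at htr
  simp at htr
  linear_combination -htr + hst

theorem SumThreeIdem.directSum {K ι : Type*} [Field K] [DecidableEq ι] (N : ι → Type*)
    [∀ i, AddCommGroup (N i)] [∀ i, Module K (N i)] (φ : ∀ i, Module.End K (N i))
    (h : ∀ i, SumThreeIdem (φ i)) : SumThreeIdem (V := DirectSum ι N) (DirectSum.lmap φ) := by
  choose E P Q hE hP hQ hφ using h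
  have idem : ∀ E : ∀ i, Module.End K (N i), (∀ i, E i * E i = E i) →
      (DirectSum.lmap E : Module.End K (DirectSum ι N)) * DirectSum.lmap E = DirectSum.lmap E := by
    intro E hE
    ext i x j
    have := LinearMap.congr_fun (hE i) x
    rw [Module.End.mul_apply] at this
    simp [this]
  refine ⟨DirectSum.lmap E, DirectSum.lmap P, DirectSum.lmap Q, idem E hE, idem P hP, idem Q hQ, ?_⟩
  ext i x j
  simp [hφ]

theorem SumThreeIdem.congr {K V W : Type*} [Field K] [AddCommGroup V] [Module K V]
    [AddCommGroup W] [Module K W] (e : V ≃ₗ[K] W) {φ : Module.End K V} {ψ : Module.End K W}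
    (he : ∀ v, e (φ v) = ψ (e v)) (h : SumThreeIdem ψ) : SumThreeIdem φ := by
  obtain ⟨E, P, Q, hE, hP, hQ, rfl⟩ := h
  refine ⟨e.symm.conj E, e.symm.conj P, e.symm.conj Q, ?_, ?_, ?_, ?_⟩
  · rw [Module.End.mul_eq_comp, ← LinearEquiv.conj_comp, ← Module.End.mul_eq_comp, hE]
  · rw [Module.End.mul_eq_comp, ← LinearEquiv.conj_comp, ← Module.End.mul_eq_comp, hP]
  · rw [Module.End.mul_eq_comp, ← LinearEquiv.conj_comp, ← Module.End.mul_eq_comp, hQ]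
  · ext v
    apply e.injective
    rw [he]
    simp [LinearEquiv.conj_apply]

open Polynomial in
theorem SumThreeIdem.all {K V : Type*} [Field K] [AddCommGroup V] [Module K V]
    [FiniteDimensional K V]
    (hK : ∀ c : K, ∃ s t : K, s * s = s ∧ t * t = t ∧ c = s + t + 2)
    (φ : Module.End K V) : SumThreeIdem φ := by
  classical
  have htors : Module.IsTorsion K[X] (Module.AEval' φ) :=
    Module.AEval.isTorsion_of_finiteDimensional K V φ
  obtain ⟨ι, _, p, hp, e, ⟨L⟩⟩ := Module.equiv_directSum_of_isTorsion htors
  have hD := SumThreeIdem.directSum (fun i => K[X] ⧸ Submodule.span K[X] {p i ^ e i}) _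
    (fun i => SumThreeIdem.cyclic hK (p i ^ e i) (pow_ne_zero _ (hp i).ne_zero))
  refine SumThreeIdem.congr ((Module.AEval'.of φ).trans (L.restrictScalars K)) ?_ hD
  intro v
  change L (Module.AEval'.of φ (φ v)) = _
  rw [← Module.AEval'.X_smul_of, map_smul]
  ext i
  rfl

theorem backward (p : ℕ) [Fact p.Prime] 
    (hK : ∀ c : ZMod p, ∃ s t : ZMod p, s * s = s ∧ t * t = t ∧ c = s + t + 2)
    (R : Type*) [CommRing R] (φ : R ≃+* ZMod p) (n : ℕ) (A : Matrix (Fin n) (Fin n) R) :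
      ∃ E₁ E₂ E₃ : Matrix (Fin n) (Fin n) R,
        E₁ * E₁ = E₁ ∧ E₂ * E₂ = E₂ ∧ E₃ * E₃ = E₃ ∧ A = E₁ + E₂ + E₃ := by
  obtain ⟨E, P, Q, hE, hP, hQ, h⟩ := SumThreeIdem.all hK (Matrix.toLin' (φ.mapMatrix A))
  refine ⟨φ.symm.mapMatrix (LinearMap.toMatrix' E), φ.symm.mapMatrix (LinearMap.toMatrix' P),
    φ.symm.mapMatrix (LinearMap.toMatrix' Q), ?_, ?_, ?_, ?_⟩
  · rw [← map_mul, ← LinearMap.toMatrix'_mul, hE]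
  · rw [← map_mul, ← LinearMap.toMatrix'_mul, hP]
  · rw [← map_mul, ← LinearMap.toMatrix'_mul, hQ]
  · rw [← map_add, ← map_add, ← map_add, ← map_add, ← h, LinearMap.toMatrix'_toLin']
    ext i j; simp

/-- For an integral domain `R` and `n ≥ 1`, every matrix in `M_n(R)` is a sum of three
idempotent matrices if and only if `R ≅ ℤ/2` or `R ≅ ℤ/3`. -/
theorem matrix_sum_three_idempotents_domain_iff (R : Type*) [CommRing R] [IsDomain R]
    (n : ℕ) (hn : 1 ≤ n) :
    (∀ A : Matrix (Fin n) (Fin n) R,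
      ∃ E₁ E₂ E₃ : Matrix (Fin n) (Fin n) R,
        E₁ * E₁ = E₁ ∧ E₂ * E₂ = E₂ ∧ E₃ * E₃ = E₃ ∧ A = E₁ + E₂ + E₃) ↔
    (Nonempty (R ≃+* ZMod 2) ∨ Nonempty (R ≃+* ZMod 3)) := by
  constructor
  · exact forward R n hn
  · rintro (⟨⟨φ⟩⟩ | ⟨⟨φ⟩⟩) A
    · exact backward 2 (by decide) R φ n A
    · exact backward 3 (by decide) R φ n A
end
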